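/- arXiv:math/0412013 — 3 statements merged into one kernel-verified Lean document; each statement's English description precedes it below -/
import Mathlib

section
/- Let S be a simple artinian k-algebra and let S^e := S ⊗_k S^op. Then the projective dimension of S as a left S^e-module is finite if and only if the left global dimension of S^e is finite; and in that case pdim_{S^e}(S) = gldim(S^e). -/
/-!
Statement 0 (Lemma 1.3(b)): for a simple artinian `k`-algebra `S`, the projective dimension
of `S` as a left module over its enveloping algebra `S^e := S ⊗[k] Sᵐᵒᵖ` is finite iff the
left global dimension of `S^e` is finite, and in that case the two numbers coincide.
-/

open CategoryTheory Limits TensorProduct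

universe u

/-- The injective dimension of a module `M`, defined as the least `n : ℕ∞` for which
there is an injective resolution of `M` that vanishes in all cohomological degrees `> n`. -/
noncomputable def ModuleCat.injDim {R : Type u} [Ring R] (M : ModuleCat.{u} R) : ℕ∞ :=
  sInf {n : ℕ∞ | ∃ I : InjectiveResolution M, ∀ i : ℕ, n < (i : ℕ∞) → IsZero (I.cocomplex.X i)}

/-- The projective dimension of a module `M`, defined as the least `n : ℕ∞` for which
there is a projective resolution of `M` that vanishes in all homological degrees `> n`. -/
noncomputable def ModuleCat.projDim {R : Type u} [Ring R] (M : ModuleCat.{u} R) : ℕ∞ :=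
  sInf {n : ℕ∞ | ∃ P : ProjectiveResolution M, ∀ i : ℕ, n < (i : ℕ∞) → IsZero (P.complex.X i)}

/-- The injective dimension of a ring as a left module over itself. -/
noncomputable def Ring.selfInjDim (R : Type u) [Ring R] : ℕ∞ :=
  ModuleCat.injDim (ModuleCat.of R R)

/-- The left global dimension of a ring: the supremum of the projective dimensions
of all left `R`-modules. -/
noncomputable def Ring.globalDim (R : Type u) [Ring R] : ℕ∞ :=
  ⨆ M : ModuleCat.{u} R, M.projDim

/-- `S` is a left module over its enveloping algebra `S ⊗[k] Sᵐᵒᵖ`, via `(a ⊗ bᵒᵖ) • x = a * x * b`. -/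
noncomputable instance (priority := 50) envModule (k : Type u) [Field k] (A : Type u) [Ring A] [Algebra k A] :
    Module (A ⊗[k] Aᵐᵒᵖ) A :=
  TensorProduct.Algebra.module

/-!
Let `M` and `N` be `S`-bimodules. A bimodule map `M ⟶ N` is the same as a bimodule map from `S` to
the bimodule `Hom_{Sᵐᵒᵖ}(M, N)` of right `S`-linear maps, by evaluation at `1`. For semisimple `S`
the functor `Hom_{Sᵐᵒᵖ}(M, -)` is exact, since `M` is projective as a right module, and it preserves
injectives: an extension that is only linear on one side always exists, and composing with the
embedding of an injective bimodule in a coinduced one, which splits, makes it linear on both sides.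
Dimension shifting therefore gives `Ext^n(M, N) ≅ Ext^n(S, Hom_{Sᵐᵒᵖ}(M, N))`, so no bimodule has
larger projective dimension than `S`.
-/

open Abelian
open ModuleCat (of ofHom)

section Resolutions

variable {C : Type*} [Category* C] [Abelian C]

theorem exact_epi_comp {A K P X : C} {i : K ⟶ P} {q : P ⟶ X} {w : i ≫ q = 0}
    (h : (ShortComplex.mk i q w).Exact) (p : A ⟶ K) [Epi p] :
    (ShortComplex.mk (p ≫ i) q (by rw [Category.assoc, w, comp_zero])).Exact :=
  (ShortComplex.exact_iff_of_epi_of_isIso_of_mono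
    { τ₁ := p, τ₂ := 𝟙 _, τ₃ := 𝟙 _ : ShortComplex.mk (p ≫ i) q _ ⟶ ShortComplex.mk i q w }).2 h

theorem exact_comp_mono {A K P X : C} {p : A ⟶ K} {i : K ⟶ P} {w : p ≫ i = 0}
    (h : (ShortComplex.mk p i w).Exact) (q : P ⟶ X) [Mono q] :
    (ShortComplex.mk p (i ≫ q) (by rw [← Category.assoc, w, zero_comp])).Exact :=
  (ShortComplex.exact_iff_of_epi_of_isIso_of_mono
    { τ₁ := 𝟙 _, τ₂ := 𝟙 _, τ₃ := q : ShortComplex.mk p i w ⟶ ShortComplex.mk p (i ≫ q) _ }).1 h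

/-- The projective resolution of `X` given by an exact complex `⋯ ⟶ D₁ ⟶ D₀ ⟶ X ⟶ 0` with
projective terms `Dₙ`. -/
noncomputable def projectiveResolutionOfExact (D : ChainComplex C ℕ) [∀ n, Projective (D.X n)]
    {X : C} (q : D.X 0 ⟶ X) (hq : Epi q) (w : D.d 1 0 ≫ q = 0) (hD₀ : (ShortComplex.mk _ _ w).Exact)
    (hD : ∀ n, D.ExactAt (n + 1)) : ProjectiveResolution X where
  complex := D
  π := (ChainComplex.toSingle₀Equiv D X).symm ⟨q, w⟩
  quasiIso := ⟨fun n => by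
    cases n with
    | zero =>
      rw [ChainComplex.quasiIsoAt₀_iff,
        ShortComplex.quasiIso_iff_of_zeros' _ (D.shape 0 0 (by simp)) (by rfl) (by rfl)]
      refine (ShortComplex.exact_and_epi_g_iff_of_iso ?_).2 ⟨hD₀, hq⟩
      exact ShortComplex.isoMk (Iso.refl _) (Iso.refl _) (Iso.refl _)
        ((Category.id_comp (D.d 1 0)).trans (Category.comp_id (D.d 1 0)).symm)
        (((Category.id_comp q).trans (ChainComplex.toSingle₀Equiv_symm_apply_f_zero q w).symm).trans
          (Category.comp_id (((ChainComplex.toSingle₀Equiv D X).symm ⟨q, w⟩).f 0)).symm)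
    | succ n =>
      rw [quasiIsoAt_iff_exactAt' _ _ (ChainComplex.exactAt_succ_single_obj _ _)]
      exact hD n⟩

variable {E : ShortComplex C} {X : C}

/-- The augmentation `P₀ ⟶ X` of a projective resolution of `X`. -/
noncomputable def augmentation (P : ProjectiveResolution X) : P.complex.X 0 ⟶ X := P.π.f 0

instance (P : ProjectiveResolution X) : Epi (augmentation P) := inferInstanceAs (Epi (P.π.f 0))

theorem d_comp_augmentation (P : ProjectiveResolution X) :
    P.complex.d 1 0 ≫ augmentation P = 0 := P.complex_d_comp_π_f_zero

theorem exact_augmentation (P : ProjectiveResolution X) :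
    (ShortComplex.mk _ _ (d_comp_augmentation P)).Exact := P.exact₀

/-- The complex `⋯ ⟶ Q₁ ⟶ Q₀ ⟶ P` obtained by splicing a projective resolution `Q` of the
first term of `K ⟶ P ⟶ X` with the first map. -/
noncomputable abbrev spliceComplex (E : ShortComplex C) (Q : ProjectiveResolution E.X₁) :
    ChainComplex C ℕ :=
  ChainComplex.augment Q.complex (augmentation Q ≫ E.f) (by
    rw [← Category.assoc, d_comp_augmentation, zero_comp])

theorem spliceComplex_exactAt_succ [Mono E.f] (Q : ProjectiveResolution E.X₁) (n : ℕ) :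
    (spliceComplex E Q).ExactAt (n + 1) := by
  rw [HomologicalComplex.exactAt_iff' _ (n + 1 + 1) (n + 1) n (by simp) (by simp)]
  match n with
  | 0 => exact exact_comp_mono (exact_augmentation Q) E.f
  | n + 1 => exact Q.exact_succ n

/-- The projective resolution `⋯ ⟶ Q₁ ⟶ Q₀ ⟶ P ⟶ X` of the last term of a short exact sequence
`0 ⟶ K ⟶ P ⟶ X ⟶ 0` with `P` projective, built from a projective resolution `Q` of `K`. -/
noncomputable def spliceResolution (hE : E.ShortExact) [Projective E.X₂]
    (Q : ProjectiveResolution E.X₁) : ProjectiveResolution E.X₃ :=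
  have := hE.mono_f
  have (n : ℕ) : Projective ((spliceComplex E Q).X n) := match n with
    | 0 => ‹Projective E.X₂›
    | n + 1 => Q.projective n
  projectiveResolutionOfExact (spliceComplex E Q) E.g hE.epi_g
    ((Category.assoc _ _ _).trans ((congrArg _ E.zero).trans comp_zero))
    (exact_epi_comp hE.exact (augmentation Q)) (spliceComplex_exactAt_succ Q)

theorem exists_projectiveResolution_isZero [EnoughProjectives C] (n : ℕ) (X : C)
    (hX : HasProjectiveDimensionLE X n) :
    ∃ P : ProjectiveResolution X, ∀ i, n < i → IsZero (P.complex.X i) := by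
  induction n generalizing X with
  | zero =>
    have : Projective X := (projective_iff_hasProjectiveDimensionLE_zero X).2 hX
    exact ⟨ProjectiveResolution.self X, fun i hi =>
      HomologicalComplex.isZero_single_obj_X _ _ _ _ hi.ne'⟩
  | succ n ih =>
    let E := ShortComplex.mk _ _ (kernel.condition (Projective.π X))
    have hE : E.ShortExact := { exact := ShortComplex.exact_kernel _ }
    have hproj : Projective E.X₂ := Projective.projective_over X
    obtain ⟨Q, hQ⟩ := ih E.X₁ ((hE.hasProjectiveDimensionLT_X₃_iff n hproj).1 hX)
    refine ⟨spliceResolution hE Q, fun i hi => ?_⟩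
    obtain ⟨j, rfl⟩ := Nat.exists_eq_add_of_lt (Nat.zero_lt_of_lt hi)
    rw [zero_add] at hi ⊢
    exact hQ j (by omega)

theorem hasProjectiveDimensionLE_of_isZero {X : C} (P : ProjectiveResolution X) {n : ℕ}
    (hP : ∀ i, n < i → IsZero (P.complex.X i)) : HasProjectiveDimensionLE X n := by
  let := HasExt.standard C
  refine HasProjectiveDimensionLT.mk fun i hi Y e => ?_
  obtain ⟨f, hf, rfl⟩ := P.extMk_surjective e (i + 1) rfl
  obtain rfl : f = 0 := (hP i hi).eq_of_src _ _
  exact P.extMk_zero _ _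

end Resolutions

section ProjDim

variable {R : Type u} [Ring R]

theorem projDim_le_iff_hasProjectiveDimensionLE (M : ModuleCat.{u} R) (n : ℕ) :
    M.projDim ≤ n ↔ HasProjectiveDimensionLE M n := by
  constructor
  · intro h
    obtain ⟨P, hP⟩ := csInf_mem (s := {n : ℕ∞ | ∃ P : ProjectiveResolution M,
        ∀ i : ℕ, n < (i : ℕ∞) → IsZero (P.complex.X i)})
      ⟨⊤, ProjectiveResolution.of M, fun _ hi => absurd hi not_top_lt⟩
    exact hasProjectiveDimensionLE_of_isZero P fun i hi => hP i (h.trans_lt (Nat.cast_lt.2 hi))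
  · intro h
    obtain ⟨P, hP⟩ := exists_projectiveResolution_isZero n M h
    exact sInf_le ⟨P, fun i hi => hP i (Nat.cast_lt.1 hi)⟩

theorem projDim_eq_globalDim {X : ModuleCat.{u} R}
    (h : ∀ n, HasProjectiveDimensionLE X n → ∀ M : ModuleCat.{u} R, HasProjectiveDimensionLE M n) :
    X.projDim = Ring.globalDim R := by
  refine le_antisymm (le_iSup ModuleCat.projDim X) (iSup_le fun M => ?_)
  cases hX : X.projDim with
  | top => exact le_top
  | coe n =>
    rw [projDim_le_iff_hasProjectiveDimensionLE]
    exact h n ((projDim_le_iff_hasProjectiveDimensionLE X n).1 hX.le) M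

end ProjDim

section ExtComparison

variable {C D : Type*} [Category* C] [Abelian C] [Category* D] [Abelian D] (G : C ⥤ D) [G.Additive]
  [PreservesFiniteLimits G] [PreservesFiniteColimits G] {X : D} {M : C} (η : X ⟶ G.obj M)

section

variable [HasExt C] [HasExt D]

/-- The comparison map `Ext^n(M, N) → Ext^n(X, G N)`, `e ↦ G(e) ∘ η`, attached to an exact functor
`G` and a morphism `η : X ⟶ G M`. -/
noncomputable def extComparison (N : C) (n : ℕ) : Ext M N n →+ Ext X (G.obj N) n :=
  ((Ext.mk₀ η).precomp (G.obj N) (zero_add n)).comp (G.mapExtAddHom M N n)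

theorem extComparison_comp_postcomp {N N' : C} {p q r : ℕ} (e : Ext N N' q) (h : p + q = r) :
    (extComparison G η N' r).comp (e.postcomp M h) =
      ((e.mapExactFunctor G).postcomp X h).comp (extComparison G η N p) := by
  ext x
  change (Ext.mk₀ η).comp ((x.comp e h).mapExactFunctor G) (zero_add r) =
    ((Ext.mk₀ η).comp (x.mapExactFunctor G) (zero_add p)).comp (e.mapExactFunctor G) h
  rw [Ext.mapExactFunctor_comp, Ext.comp_assoc]
  omega

theorem extComparison_mk₀ {N : C} (f : M ⟶ N) :
    extComparison G η N 0 (Ext.mk₀ f) = Ext.mk₀ (η ≫ G.map f) := by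
  change (Ext.mk₀ η).comp ((Ext.mk₀ f).mapExactFunctor G) (zero_add 0) = _
  rw [Ext.mapExactFunctor_mk₀, Ext.mk₀_comp_mk₀]

theorem extComparison_zero_bijective {N : C}
    (hη : Function.Bijective fun f : M ⟶ N => η ≫ G.map f) :
    Function.Bijective (extComparison G η N 0) := by
  rw [← Function.Bijective.of_comp_iff _ (Ext.mk₀_bijective M N)]
  have h_mk₀ : extComparison G η N 0 ∘ Ext.mk₀ = Ext.mk₀ ∘ fun f => η ≫ G.map f :=
    funext (extComparison_mk₀ G η)
  rw [h_mk₀]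
  exact (Ext.mk₀_bijective X _).comp hη

theorem extComparison_bijective [EnoughInjectives C] [G.PreservesInjectiveObjects]
    (hη : ∀ N : C, Function.Bijective fun f : M ⟶ N => η ≫ G.map f) (N : C) (n : ℕ) :
    Function.Bijective (extComparison G η N n) := by
  induction n generalizing N with
  | zero => exact extComparison_zero_bijective G η (hη N)
  | succ n hn =>
    let I : InjectivePresentation N := Classical.arbitrary _
    let E := ShortComplex.mk _ _ (cokernel.condition I.f)
    have : Injective (E.map G).X₂ := Functor.PreservesInjectiveObjects.injective_obj I.injective
    have hE : E.ShortExact := { exact := ShortComplex.exact_cokernel I.f }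
    have comm_g := extComparison_comp_postcomp G η (Ext.mk₀ E.g) (add_zero n)
    rw [Ext.mapExactFunctor_mk₀] at comm_g
    have comm_δ := extComparison_comp_postcomp G η hE.extClass (Eq.refl (n + 1))
    rw [Ext.mapExactFunctor_extClass] at comm_δ
    -- Five lemma for the sequence `Ext^n(-, E₂) → Ext^n(-, E₃) → Ext^(n+1)(-, N) → 0`.
    exact AddMonoidHom.bijective_of_surjective_of_bijective_of_right_exact _ _ _ _
      (extComparison G η E.X₂ n) (extComparison G η E.X₃ n) (extComparison G η E.X₁ (n + 1))
      comm_g.symm comm_δ.symm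
      ((ShortComplex.ab_exact_iff_function_exact _).mp
        (Ext.covariant_sequence_exact₃' M hE n (n + 1) rfl))
      ((ShortComplex.ab_exact_iff_function_exact _).mp
        (Ext.covariant_sequence_exact₃' X (hE.map G) n (n + 1) rfl))
      (hn _).surjective (hn _)
      (fun e => Ext.covariant_sequence_exact₁ _ hE e (Ext.eq_zero_of_injective _) rfl)
      (fun e => Ext.covariant_sequence_exact₁ _ (hE.map G) e (Ext.eq_zero_of_injective _) rfl)

end

theorem hasProjectiveDimensionLT_of_comp_map_bijective [EnoughInjectives C]
    [G.PreservesInjectiveObjects]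
    (hη : ∀ N : C, Function.Bijective fun f : M ⟶ N => η ≫ G.map f) (n : ℕ)
    [HasProjectiveDimensionLT X n] : HasProjectiveDimensionLT M n := by
  let := HasExt.standard C
  let := HasExt.standard D
  exact HasProjectiveDimensionLT.mk fun i hi N e =>
    (extComparison_bijective G η hη N i).injective <| by
      rw [map_zero, Ext.eq_zero_of_hasProjectiveDimensionLT (extComparison G η N i e) n hi]

end ExtComparison

theorem exists_comp_eq_of_exact {R A B C P : Type*} [Semiring R] [AddCommMonoid A]
    [AddCommMonoid B] [AddCommMonoid C] [AddCommMonoid P] [Module R A] [Module R B] [Module R C]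
    [Module R P] [Module.Projective R P] {f : A →ₗ[R] B} {g : B →ₗ[R] C}
    (hfg : Function.Exact f g) (h : P →ₗ[R] B) (hg : g ∘ₗ h = 0) :
    ∃ l : P →ₗ[R] A, f ∘ₗ l = h := by
  obtain ⟨l, hl⟩ := Module.projective_lifting_property f.rangeRestrict
    (h.codRestrict f.range fun p => (hfg _).1 (LinearMap.congr_fun hg p)) f.surjective_rangeRestrict
  exact ⟨l, LinearMap.ext fun p => congrArg Subtype.val (LinearMap.congr_fun hl p)⟩

namespace Bimodule

section Actions

variable {k : Type*} [CommRing k] {R U : Type u} [Ring R] [Ring U] [Algebra k R] [Algebra k U]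
  (N : ModuleCat.{u} (R ⊗[k] U))

/-- The action of the first tensor factor on a module over `R ⊗[k] U`. -/
abbrev leftModule : Module R N :=
  Module.compHom N (Algebra.TensorProduct.includeLeftRingHom : R →+* R ⊗[k] U)

/-- The action of the second tensor factor on a module over `R ⊗[k] U`. For `U = Sᵐᵒᵖ` this is
the right action of `S`. -/
abbrev rightModule : Module U N :=
  Module.compHom N (Algebra.TensorProduct.includeRight : U →ₐ[k] R ⊗[k] U).toRingHom

/-- The action of the base ring on a module over `R ⊗[k] U`. -/
abbrev baseModule : Module k N :=
  Module.compHom N (algebraMap k (R ⊗[k] U))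

attribute [local instance] leftModule rightModule baseModule

variable {N}

theorem tmul_smul (r : R) (u : U) (n : N) : (r ⊗ₜ[k] u) • n = r • u • n := by
  change _ = (r ⊗ₜ[k] (1 : U)) • ((1 : R) ⊗ₜ[k] u) • n
  rw [smul_smul, Algebra.TensorProduct.tmul_mul_tmul, mul_one, one_mul]

theorem tmul_smul_comm (r : R) (u : U) (n : N) : (r ⊗ₜ[k] u) • n = u • r • n := by
  change _ = ((1 : R) ⊗ₜ[k] u) • (r ⊗ₜ[k] (1 : U)) • n
  rw [smul_smul, Algebra.TensorProduct.tmul_mul_tmul, mul_one, one_mul]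

instance : SMulCommClass R U N := ⟨fun r u n => by rw [← tmul_smul, tmul_smul_comm]⟩

instance : SMulCommClass U R N := .symm R U N

instance : IsScalarTower k R N := .of_algebraMap_smul fun _ _ => rfl

instance : IsScalarTower k U N := .of_algebraMap_smul fun c n =>
  congrArg (· • n) ((Algebra.TensorProduct.includeRight : U →ₐ[k] R ⊗[k] U).commutes c)

variable {N' : ModuleCat.{u} (R ⊗[k] U)}

theorem map_left_smul (f : N ⟶ N') (r : R) (n : N) : f (r • n) = r • f n :=
  map_smul f.hom _ n

/-- A morphism of modules over `R ⊗[k] U`, as a `U`-linear map. -/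
def restrictRight (f : N ⟶ N') : N →ₗ[U] N' :=
  { f.hom with map_smul' := fun _ n => map_smul f.hom _ n }

/-- An additive map commuting with the action of elementary tensors, as a morphism of modules
over `R ⊗[k] U`. -/
def homOfTMulSMul (f : N →+ N')
    (hf : ∀ (r : R) (u : U) (n : N), f ((r ⊗ₜ[k] u) • n) = (r ⊗ₜ[k] u) • f n) : N ⟶ N' :=
  ofHom
    { f with
      map_smul' a n := by
        induction a with
        | zero => exact (congrArg f (zero_smul _ n)).trans ((map_zero f).trans (zero_smul _ _).symm)
        | tmul r u => exact hf r u n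
        | add a b ha hb => simp_all [add_smul] }

section HomFunctor

variable {T : Type u} [Ring T] [Algebra k T] (M : ModuleCat.{u} (T ⊗[k] U))

section

variable (N)

local instance : Module Tᵐᵒᵖ (M →ₗ[U] N) := inferInstanceAs (Module Tᵈᵐᵃ (M →ₗ[U] N))

local instance : SMulCommClass R Tᵐᵒᵖ (M →ₗ[U] N) := ⟨fun _ _ _ => rfl⟩

local instance : IsScalarTower k Tᵐᵒᵖ (M →ₗ[U] N) :=
  ⟨fun c t f => LinearMap.ext fun m =>
    (congrArg f (smul_assoc c t.unop m)).trans (f.map_smul_of_tower c _)⟩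

/-- The functor `Hom_U(M, -)` from `R ⊗[k] U`-modules to `R ⊗[k] Tᵐᵒᵖ`-modules, for `M` a module
over `T ⊗[k] U`: here `R` acts on the values and `T` on the arguments of a `U`-linear map. -/
noncomputable def homFunctor : ModuleCat.{u} (R ⊗[k] U) ⥤ ModuleCat.{u} (R ⊗[k] Tᵐᵒᵖ) where
  obj N :=
    letI : Module (R ⊗[k] Tᵐᵒᵖ) (M →ₗ[U] N) := TensorProduct.Algebra.module
    of _ (M →ₗ[U] N)
  map f := homOfTMulSMul
    (AddMonoidHom.mk' (fun h : M →ₗ[U] _ => restrictRight f ∘ₗ h)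
      fun _ _ => LinearMap.comp_add _ _ _)
    fun r t h => LinearMap.ext fun m => map_left_smul f r (h (t.unop • m))

end

variable {M}

instance : FunLike ((homFunctor M).obj N) M N := inferInstanceAs (FunLike (M →ₗ[U] N) M N)

instance : LinearMapClass ((homFunctor M).obj N) U M N :=
  inferInstanceAs (LinearMapClass (M →ₗ[U] N) U M N)

theorem hom_ext {g h : (homFunctor M).obj N} (H : ∀ m, g m = h m) : g = h := LinearMap.ext H

theorem hom_add_apply (g h : (homFunctor M).obj N) (m : M) : (g + h) m = g m + h m := rfl

theorem tmul_smul_apply (r : R) (t : Tᵐᵒᵖ) (h : (homFunctor M).obj N) (m : M) :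
    ((r ⊗ₜ[k] t) • h) m = r • h (t.unop • m) := rfl

theorem left_smul_apply (r : R) (h : (homFunctor M).obj N) (m : M) : (r • h) m = r • h m :=
  congrArg (r • h ·) (one_smul T m)

theorem base_smul_apply (c : k) (h : (homFunctor M).obj N) (m : M) : (c • h) m = c • h m := by
  rw [← algebraMap_smul R c h, left_smul_apply, algebraMap_smul]

theorem right_smul_apply (t : Tᵐᵒᵖ) (h : (homFunctor M).obj N) (m : M) :
    (t • h) m = h (t.unop • m) :=
  one_smul R _

variable (M)

instance : (homFunctor (R := R) M).Additive where

theorem homFunctor_map_exact [Module.Projective U M] (E : ShortComplex (ModuleCat.{u} (R ⊗[k] U)))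
    (hE : E.Exact) : (E.map (homFunctor M)).Exact := by
  rw [ShortComplex.ShortExact.moduleCat_exact_iff_function_exact] at hE ⊢
  have hE' : Function.Exact (restrictRight E.f) (restrictRight E.g) := hE
  intro (h : M →ₗ[U] E.X₂)
  refine ⟨fun hg => exists_comp_eq_of_exact hE' h hg, ?_⟩
  rintro ⟨(l : M →ₗ[U] E.X₁), rfl⟩
  exact hom_ext fun m => hE.apply_apply_eq_zero (l m)

theorem homFunctor_preservesFiniteLimits_and_colimits [Module.Projective U M] :
    PreservesFiniteLimits (homFunctor (R := R) M) ∧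
      PreservesFiniteColimits (homFunctor (R := R) M) :=
  ((homFunctor M).exact_tfae.out 1 3).1 (homFunctor_map_exact M)

end HomFunctor

section Coinduced

/-- The `k`-linear maps from `R` to an `R ⊗[k] U`-module `N`, on which `R` acts by right
multiplication on the argument. A type synonym, since `R →ₗ[k] N` has another action of `R`. -/
def CoinducedHom (N : ModuleCat.{u} (R ⊗[k] U)) : Type u := R →ₗ[k] N

namespace CoinducedHom

instance : AddCommGroup (CoinducedHom N) := inferInstanceAs (AddCommGroup (R →ₗ[k] N))
instance : Module k (CoinducedHom N) := inferInstanceAs (Module k (R →ₗ[k] N))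
instance : Module U (CoinducedHom N) := inferInstanceAs (Module U (R →ₗ[k] N))
instance : IsScalarTower k U (CoinducedHom N) :=
  inferInstanceAs (IsScalarTower k U (R →ₗ[k] N))
instance : FunLike (CoinducedHom N) R N := inferInstanceAs (FunLike (R →ₗ[k] N) R N)
instance : LinearMapClass (CoinducedHom N) k R N :=
  inferInstanceAs (LinearMapClass (R →ₗ[k] N) k R N)

theorem ext {φ ψ : CoinducedHom N} (h : ∀ x, φ x = ψ x) : φ = ψ := LinearMap.ext h

instance : Module R (CoinducedHom N) where
  smul r φ := φ.comp (LinearMap.mulRight k r)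
  one_smul φ := ext fun x => congrArg φ (mul_one x)
  mul_smul r s φ := ext fun x => congrArg φ (mul_assoc x r s).symm
  smul_zero _ := rfl
  smul_add _ _ _ := rfl
  add_smul r s φ := ext fun x => (congrArg φ (mul_add x r s)).trans (map_add φ _ _)
  zero_smul φ := ext fun x => (congrArg φ (mul_zero x)).trans (map_zero φ)

instance : SMulCommClass R U (CoinducedHom N) := ⟨fun _ _ _ => rfl⟩

instance : IsScalarTower k R (CoinducedHom N) :=
  ⟨fun c r φ => ext fun x => (congrArg φ (mul_smul_comm c x r)).trans (map_smul φ c _)⟩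

end CoinducedHom

/-- The coinduced module `Hom_k(R, N)` over `R ⊗[k] U`, with
`((r ⊗ u) • φ) x = u • φ (x * r)`. -/
noncomputable def coinduced (N : ModuleCat.{u} (R ⊗[k] U)) : ModuleCat.{u} (R ⊗[k] U) :=
  letI : Module (R ⊗[k] U) (CoinducedHom N) := TensorProduct.Algebra.module
  of _ (CoinducedHom N)

instance : FunLike (coinduced N) R N := inferInstanceAs (FunLike (CoinducedHom N) R N)

theorem coinduced_ext {φ ψ : coinduced N} (h : ∀ x, φ x = ψ x) : φ = ψ := CoinducedHom.ext h

theorem coinduced_add_apply (φ ψ : coinduced N) (x : R) : (φ + ψ) x = φ x + ψ x := rfl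

theorem coinduced_left_smul_apply (r : R) (φ : coinduced N) (x : R) : (r • φ) x = φ (x * r) :=
  one_smul U _

theorem coinduced_right_smul_apply (u : U) (φ : coinduced N) (x : R) : (u • φ) x = u • φ x :=
  congrArg (u • φ ·) (mul_one x)

/-- The unit `n ↦ (r ↦ r • n)` of the coinduction. -/
noncomputable def toCoinduced (N : ModuleCat.{u} (R ⊗[k] U)) : N ⟶ coinduced N :=
  homOfTMulSMul
    (AddMonoidHom.mk' (fun n => (LinearMap.toSpanSingleton R N n).restrictScalars k)
      fun m n => coinduced_ext fun r => smul_add r m n)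
    fun r u n => coinduced_ext fun x => by
      change x • (r ⊗ₜ[k] u) • n = u • (x * r) • n
      rw [tmul_smul_comm, mul_smul, smul_comm x u]

theorem toCoinduced_apply (n : N) (r : R) : toCoinduced N n r = r • n := rfl

instance : Mono (toCoinduced N) := (ModuleCat.mono_iff_injective _).2 fun m n h => by
  simpa only [toCoinduced_apply, one_smul] using DFunLike.congr_fun h 1

variable {T : Type u} [Ring T] [Algebra k T] {M : ModuleCat.{u} (T ⊗[k] U)}
  {X Y : ModuleCat.{u} (R ⊗[k] Tᵐᵒᵖ)}

/-- For a `Tᵐᵒᵖ`-linear map `h : Y → Hom_U(M, N)` and `y : Y`, the `U`-linear map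
`m ↦ (r ↦ h (r • y) m)` from `M` to the module coinduced by `N`. -/
noncomputable def coinducedOrbit (h : Y →ₗ[Tᵐᵒᵖ] (homFunctor M).obj N) (y : Y) :
    (homFunctor M).obj (coinduced N) :=
  LinearMap.mk
    { toFun m :=
        ({ toFun r := h (r • y) m
           map_add' r r' := by rw [add_smul, map_add, hom_add_apply]
           map_smul' c r := by
             rw [smul_assoc, h.map_smul_of_tower, base_smul_apply, RingHom.id_apply] } :
          R →ₗ[k] N)
      map_add' m m' := coinduced_ext fun r => map_add (h (r • y)) m m' }
    fun u m => coinduced_ext fun r => by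
      rw [coinduced_right_smul_apply]
      exact map_smul (h (r • y)) u m

theorem coinducedOrbit_apply (h : Y →ₗ[Tᵐᵒᵖ] (homFunctor M).obj N) (y : Y) (m : M) (r : R) :
    coinducedOrbit h y m r = h (r • y) m := rfl

/-- The morphism to the coinduced module corresponding to a map that is only `Tᵐᵒᵖ`-linear. -/
noncomputable def coinducedLift (h : Y →ₗ[Tᵐᵒᵖ] (homFunctor M).obj N) :
    Y ⟶ (homFunctor M).obj (coinduced N) :=
  homOfTMulSMul
    (AddMonoidHom.mk' (coinducedOrbit h) fun y z => hom_ext fun m => coinduced_ext fun r => by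
      rw [hom_add_apply, coinduced_add_apply]
      simp only [coinducedOrbit_apply, smul_add, map_add, hom_add_apply])
    fun r t y => hom_ext fun m => coinduced_ext fun x => by
      rw [tmul_smul_apply, coinduced_left_smul_apply]
      change h (x • (r ⊗ₜ[k] t) • y) m = h ((x * r) • y) (t.unop • m)
      rw [tmul_smul, ← mul_smul, smul_comm, map_smul, right_smul_apply]

theorem comp_coinducedLift (j : X ⟶ Y) (f : X ⟶ (homFunctor M).obj N)
    (h : Y →ₗ[Tᵐᵒᵖ] (homFunctor M).obj N) (hf : h ∘ₗ restrictRight j = restrictRight f) :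
    j ≫ coinducedLift h = f ≫ (homFunctor M).map (toCoinduced N) := by
  ext x
  refine hom_ext fun m => coinduced_ext fun r => ?_
  change h (r • j x) m = r • f x m
  rw [← map_left_smul, ← left_smul_apply, ← map_left_smul]
  exact congrArg (· m) (LinearMap.congr_fun hf (r • x))

-- Extend `Tᵐᵒᵖ`-linearly, correct to a morphism into the coinduced module, then retract.
instance [IsSemisimpleRing Tᵐᵒᵖ] : (homFunctor (R := R) M).PreservesInjectiveObjects where
  injective_obj {I} _ := ⟨fun {X Y} f j _ => by
    have hj : Function.Injective (restrictRight j) := (ModuleCat.mono_iff_injective j).1 ‹_›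
    obtain ⟨h, hh⟩ := (Module.injective_of_isSemisimpleRing Tᵐᵒᵖ ((homFunctor M).obj I)).out
      (restrictRight j) hj (restrictRight f)
    refine ⟨coinducedLift h ≫ (homFunctor M).map (Injective.factorThru (𝟙 I) (toCoinduced I)), ?_⟩
    rw [← Category.assoc, comp_coinducedLift j f h (LinearMap.ext hh), Category.assoc,
      ← Functor.map_comp, Injective.comp_factorThru, CategoryTheory.Functor.map_id,
      Category.comp_id]⟩

end Coinduced

section Enveloping

variable {S : Type u} [Ring S] [Algebra k S] {M N : ModuleCat.{u} (S ⊗[k] Sᵐᵒᵖ)}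

attribute [local instance] TensorProduct.Algebra.module

variable (M) in
/-- The morphism `S ⟶ Hom_{Sᵐᵒᵖ}(M, M)` of bimodules given by left multiplication. -/
noncomputable def leftMul : of (S ⊗[k] Sᵐᵒᵖ) S ⟶ (homFunctor M).obj M :=
  homOfTMulSMul
    (AddMonoidHom.mk' (fun s : S => DistribSMul.toLinearMap Sᵐᵒᵖ M s)
      fun s t => hom_ext fun m => add_smul s t m)
    fun r t s => hom_ext fun m => by
      change (r * (s * t.unop)) • m = r • s • t.unop • m
      rw [mul_smul, mul_smul]

theorem tmul_smul_one (r : S) (t : Sᵐᵒᵖ) :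
    (r ⊗ₜ[k] t) • (1 : of (S ⊗[k] Sᵐᵒᵖ) S) = r * t.unop :=
  congrArg (r * ·) (one_mul t.unop)

theorem hom_apply_one_injective {P : ModuleCat.{u} (S ⊗[k] Sᵐᵒᵖ)} :
    Function.Injective fun v : of (S ⊗[k] Sᵐᵒᵖ) S ⟶ P => v (1 : S) := fun v w h => by
  ext s
  have hs : (s ⊗ₜ[k] (1 : Sᵐᵒᵖ)) • (1 : of (S ⊗[k] Sᵐᵒᵖ) S) = s :=
    (tmul_smul_one s 1).trans (mul_one s)
  rw [← hs, map_smul, map_smul]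
  exact congrArg _ h

theorem hom_apply_one_smul (w : of (S ⊗[k] Sᵐᵒᵖ) S ⟶ (homFunctor M).obj N) (s : S) (m : M) :
    w (1 : S) (s • m) = s • w (1 : S) m := by
  have hs : ((1 : S) ⊗ₜ[k] MulOpposite.op s) • (1 : of (S ⊗[k] Sᵐᵒᵖ) S) =
      (s ⊗ₜ[k] (1 : Sᵐᵒᵖ)) • 1 := by
    rw [tmul_smul_one, tmul_smul_one, one_mul, MulOpposite.unop_one, mul_one, MulOpposite.unop_op]
  have hw := congrArg (w · m) hs
  simpa only [map_smul, tmul_smul_apply, one_smul, MulOpposite.unop_op, MulOpposite.unop_one]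
    using hw

theorem leftMul_comp_bijective :
    Function.Bijective fun f : M ⟶ N => leftMul M ≫ (homFunctor M).map f := by
  refine ⟨fun f g hfg => ?_,
    fun w => ⟨homOfTMulSMul (w (1 : S) : M →ₗ[Sᵐᵒᵖ] N) fun r t m => ?_, ?_⟩⟩
  · ext m
    have h_one : f ((1 : S) • m) = g ((1 : S) • m) := congrArg (· (1 : S) m) hfg
    rwa [one_smul] at h_one
  · change w (1 : S) _ = _ • w (1 : S) m
    rw [tmul_smul, hom_apply_one_smul, map_smul, tmul_smul]
  · refine hom_apply_one_injective (hom_ext fun m => ?_)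
    exact congrArg (w (1 : S)) (one_smul S m)

theorem hasProjectiveDimensionLT_of_self [IsSemisimpleRing S] (n : ℕ)
    [HasProjectiveDimensionLT (of (S ⊗[k] Sᵐᵒᵖ) S) n] (M : ModuleCat.{u} (S ⊗[k] Sᵐᵒᵖ)) :
    HasProjectiveDimensionLT M n := by
  have := Module.projective_of_isSemisimpleRing Sᵐᵒᵖ M
  obtain ⟨_, _⟩ := homFunctor_preservesFiniteLimits_and_colimits (R := S) M
  exact hasProjectiveDimensionLT_of_comp_map_bijective (homFunctor M) (leftMul M)
    (fun _ => leftMul_comp_bijective) n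

end Enveloping

end Actions

end Bimodule

theorem stmt_0_general (k : Type*) [CommRing k] (S : Type u) [Ring S] [Algebra k S]
    [IsSemisimpleRing S] :
    letI : Module (S ⊗[k] Sᵐᵒᵖ) S := TensorProduct.Algebra.module
    ModuleCat.projDim (ModuleCat.of (S ⊗[k] Sᵐᵒᵖ) S) = Ring.globalDim (S ⊗[k] Sᵐᵒᵖ) :=
  letI : Module (S ⊗[k] Sᵐᵒᵖ) S := TensorProduct.Algebra.module
  projDim_eq_globalDim fun n _ M => Bimodule.hasProjectiveDimensionLT_of_self (n + 1) M

theorem stmt_0 (k : Type u) [Field k] (S : Type u) [Ring S] [Algebra k S]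
    [IsSimpleRing S] [IsArtinianRing S] :
    (ModuleCat.projDim (ModuleCat.of (S ⊗[k] Sᵐᵒᵖ) S) ≠ ⊤ ↔
        Ring.globalDim (S ⊗[k] Sᵐᵒᵖ) ≠ ⊤) ∧
      (ModuleCat.projDim (ModuleCat.of (S ⊗[k] Sᵐᵒᵖ) S) ≠ ⊤ →
        ModuleCat.projDim (ModuleCat.of (S ⊗[k] Sᵐᵒᵖ) S) = Ring.globalDim (S ⊗[k] Sᵐᵒᵖ)) :=
  have h := stmt_0_general k S
  ⟨iff_of_eq (congrArg (· ≠ ⊤) h), fun _ => h⟩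
end

section
/- Let A ⊆ B be k-algebras. Assume that B decomposes as left A-module as B = P ⊕ N where P is a projective generator of the category of left A-modules (i.e., P is projective and every left A-module is a quotient of a direct sum of copies of P), that a similar decomposition holds for B as a right A-module, and that B is flat as a right A-module. Then the injective dimension of A as a left module over itself is at most the injective dimension of B as a left module over itself. -/
open CategoryTheory Limits TensorProduct

universe u

/-!
Statement 2 (Lemma 1.4(a)): let `A ⊆ B` be `k`-algebras.  Assume `B = P ⊕ N` as left
`A`-modules with `P` a projective generator, similarly on the right, and that `B` is flat as a
right `A`-module.  Then `injdim A ≤ injdim B` (self-injective dimensions of left modules).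

Flatness of the right `A`-module `B` is encoded, following Lambek's theorem (which holds over
any ring), as the injectivity of the character module `Hom_ℤ(B, ℚ/ℤ)` as a left `A`-module.
-/

/-- The character module `Hom_ℤ(B, ℚ/ℤ)` of a right `A`-module `B`; it is a left `A`-module
via `(a • c) b = c (b • a)`. -/
def RightCharacter (A B : Type u) [Ring A] [AddCommGroup B] [Module Aᵐᵒᵖ B] : Type u :=
  B →+ AddCircle (1 : ℚ)

namespace RightCharacter

variable (A B : Type u) [Ring A] [AddCommGroup B] [Module Aᵐᵒᵖ B]

instance : AddCommGroup (RightCharacter A B) :=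
  inferInstanceAs (AddCommGroup (B →+ AddCircle (1 : ℚ)))

instance : FunLike (RightCharacter A B) B (AddCircle (1 : ℚ)) :=
  inferInstanceAs (FunLike (B →+ AddCircle (1 : ℚ)) B (AddCircle (1 : ℚ)))

instance : AddMonoidHomClass (RightCharacter A B) B (AddCircle (1 : ℚ)) :=
  inferInstanceAs (AddMonoidHomClass (B →+ AddCircle (1 : ℚ)) B (AddCircle (1 : ℚ)))

/-- The left `A`-module structure on the character module of the right `A`-module `B`. -/
instance : Module A (RightCharacter A B) where
  smul a c := (c : B →+ AddCircle (1 : ℚ)).comp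
    (DistribMulAction.toAddMonoidHom B (MulOpposite.op a))
  one_smul c := AddMonoidHom.ext fun b => by
    show c ((MulOpposite.op (1 : A)) • b) = c b
    rw [MulOpposite.op_one, one_smul]
  mul_smul a a' c := AddMonoidHom.ext fun b => by
    show c ((MulOpposite.op (a * a')) • b) = c ((MulOpposite.op a') • ((MulOpposite.op a) • b))
    rw [MulOpposite.op_mul, mul_smul]
  smul_zero a := rfl
  smul_add a c c' := rfl
  add_smul a a' c := AddMonoidHom.ext fun b => by
    show c ((MulOpposite.op (a + a')) • b) =
      c ((MulOpposite.op a) • b) + c ((MulOpposite.op a') • b)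
    rw [MulOpposite.op_add, add_smul, map_add]
  zero_smul c := AddMonoidHom.ext fun b => by
    show c ((MulOpposite.op (0 : A)) • b) = 0
    rw [MulOpposite.op_zero, zero_smul, map_zero]

end RightCharacter

/-!
`HasInjectiveDimensionLE`, which is defined by vanishing of `Ext`, is what passes to direct
summands, and dimension shifting matches it with the length of an injective resolution. Restriction
of scalars along `f : A → B` is exact. Every injective `B`-module is a direct summand of a product
of copies of the character module of `B`, whose restriction to `A` is injective by flatness; so
restriction of scalars preserves injectives, and `B` has injective dimension at most `injdim B` over
`A`. Finally, `B` generates the left `A`-modules, so `1 = ∑ φᵢ bᵢ` for finitely many `bᵢ : B` and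
`A`-linear `φᵢ : B → A`. This factors the identity of `A` through a finite power of `B`.
-/

section InjectiveDimension

variable {C : Type*} [Category* C] [Abelian C]

/-- The injective resolution of `Z` given by an exact sequence `0 ⟶ Z ⟶ K⁰ ⟶ K¹ ⟶ ⋯` with injective
terms `Kⁱ`; exactness is required at `Z` (`mono_f`), at `K⁰` and at each `Kⁱ⁺¹`. -/
noncomputable def injectiveResolutionOfExact {Z : C} (K : CochainComplex C ℕ)
    (hK : ∀ n, Injective (K.X n)) (f : Z ⟶ K.X 0) (w : f ≫ K.d 0 1 = 0)
    (mono_f : Mono f) (exact_zero : (ShortComplex.mk f _ w).Exact)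
    (exact_succ : ∀ n, (ShortComplex.mk _ _ (K.d_comp_d n (n + 1) (n + 2))).Exact) :
    InjectiveResolution Z where
  cocomplex := K
  injective := hK
  ι := (CochainComplex.fromSingle₀Equiv K Z).symm ⟨f, w⟩
  quasiIso := ⟨fun n => by
    cases n with
    | zero =>
      rw [CochainComplex.quasiIsoAt₀_iff,
        ShortComplex.quasiIso_iff_of_zeros _ rfl rfl (K.shape 0 0 (by simp))]
      refine (ShortComplex.exact_and_mono_f_iff_of_iso ?_).2 ⟨exact_zero, mono_f⟩
      refine ShortComplex.isoMk (Iso.refl _) (Iso.refl _) (Iso.refl _) ?_ ?_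
      · have ι_f_zero : ((CochainComplex.fromSingle₀Equiv K Z).symm ⟨f, w⟩).f 0 = f :=
          CochainComplex.fromSingle₀Equiv_symm_apply_f_zero f w
        exact (Category.id_comp _).trans (ι_f_zero.symm.trans (Category.comp_id _).symm)
      · exact (Category.id_comp _).trans (Category.comp_id _).symm
    | succ n =>
      rw [quasiIsoAt_iff_exactAt _ _ (CochainComplex.exactAt_succ_single_obj _ _),
        HomologicalComplex.exactAt_iff' _ n (n + 1) (n + 2) (by simp) (by simp)]
      exact exact_succ n⟩

theorem exact_comp_mono_s2 {S : ShortComplex C} (hS : S.Exact) {Y : C} (j : S.X₃ ⟶ Y) [Mono j] :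
    (ShortComplex.mk S.f (S.g ≫ j) (by rw [S.zero_assoc, zero_comp])).Exact := by
  let α : S ⟶ ShortComplex.mk S.f (S.g ≫ j) (by rw [S.zero_assoc, zero_comp]) :=
    { τ₁ := 𝟙 _, τ₂ := 𝟙 _, τ₃ := j }
  have : Epi α.τ₁ := inferInstanceAs (Epi (𝟙 _))
  have : IsIso α.τ₂ := inferInstanceAs (IsIso (𝟙 _))
  have : Mono α.τ₃ := ‹Mono j›
  exact (ShortComplex.exact_iff_of_epi_of_isIso_of_mono α).1 hS

theorem exact_epi_comp_s2 {S : ShortComplex C} (hS : S.Exact) {X : C} (p : X ⟶ S.X₁) [Epi p] :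
    (ShortComplex.mk (p ≫ S.f) S.g (by rw [Category.assoc, S.zero, comp_zero])).Exact := by
  let α : ShortComplex.mk (p ≫ S.f) S.g (by rw [Category.assoc, S.zero, comp_zero]) ⟶ S :=
    { τ₁ := p, τ₂ := 𝟙 _, τ₃ := 𝟙 _ }
  have : Epi α.τ₁ := ‹Epi p›
  have : IsIso α.τ₂ := inferInstanceAs (IsIso (𝟙 _))
  have : Mono α.τ₃ := inferInstanceAs (Mono (𝟙 _))
  exact (ShortComplex.exact_iff_of_epi_of_isIso_of_mono α).2 hS

/-- The injective resolution `X₁ ⟶ X₂ ⟶ I⁰ ⟶ I¹ ⟶ ⋯` obtained from a short exact sequence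
`0 ⟶ X₁ ⟶ X₂ ⟶ X₃ ⟶ 0` with `X₂` injective and an injective resolution `I` of `X₃`. -/
noncomputable def injectiveResolutionSplice {S : ShortComplex C} (hS : S.ShortExact)
    [Injective S.X₂] (I : InjectiveResolution S.X₃) : InjectiveResolution S.X₁ :=
  let j : S.X₃ ⟶ I.cocomplex.X 0 := I.ι.f 0
  have w : (S.g ≫ j) ≫ I.cocomplex.d 0 1 = 0 :=
    (Category.assoc _ _ _).trans (I.ι_f_zero_comp_complex_d ▸ comp_zero)
  have : Mono j := inferInstanceAs (Mono (I.ι.f 0))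
  have : Epi S.g := hS.epi_g
  injectiveResolutionOfExact (I.cocomplex.augment (S.g ≫ j) w)
    (by
      rintro (_ | n)
      exacts [‹Injective S.X₂›, I.injective n])
    S.f (S.zero_assoc j |>.trans zero_comp) hS.mono_f (exact_comp_mono_s2 hS.exact j)
    (by
      rintro (_ | n)
      exacts [exact_epi_comp_s2 (S := .mk j _ I.ι_f_zero_comp_complex_d) I.exact₀ S.g, I.exact_succ n])

theorem hasInjectiveDimensionLE_of_injectiveResolution {Z : C} (I : InjectiveResolution Z) {n : ℕ}
    (hI : ∀ i, n < i → IsZero (I.cocomplex.X i)) : HasInjectiveDimensionLE Z n := by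
  let := HasExt.standard C
  refine (hasInjectiveDimensionLT_iff Z (n + 1)).2 fun i hi Y e => ?_
  obtain ⟨g, hg, rfl⟩ := I.extMk_surjective e (i + 1) rfl
  obtain rfl : g = 0 := (hI i hi).eq_of_tgt _ _
  exact I.extMk_zero (i + 1) rfl

theorem exists_injectiveResolution_of_hasInjectiveDimensionLE [EnoughInjectives C] (n : ℕ) (Z : C)
    [hZ : HasInjectiveDimensionLE Z n] :
    ∃ I : InjectiveResolution Z, ∀ i, n < i → IsZero (I.cocomplex.X i) := by
  induction n generalizing Z with
  | zero =>
    have : Injective Z := injective_iff_hasInjectiveDimensionLT_one.2 hZ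
    exact ⟨.self Z, fun i hi => HomologicalComplex.isZero_single_obj_X _ _ _ _ hi.ne'⟩
  | succ n ih =>
    obtain ⟨p⟩ := EnoughInjectives.presentation Z
    have hp := p.shortExact_shortComplex
    have : Injective p.shortComplex.X₂ := p.injective
    have := (hp.hasInjectiveDimensionLT_X₃_iff n this).2 hZ
    obtain ⟨I, hI⟩ := ih p.shortComplex.X₃
    refine ⟨injectiveResolutionSplice hp I, ?_⟩
    rintro (_ | i) hi
    exacts [absurd hi (Nat.not_lt_zero _), hI i (Nat.lt_of_succ_lt_succ hi)]

theorem hasInjectiveDimensionLE_obj {D : Type*} [Category* D] [Abelian D] [EnoughInjectives C]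
    (F : C ⥤ D) [F.PreservesZeroMorphisms] [PreservesFiniteLimits F] [PreservesFiniteColimits F]
    [F.PreservesInjectiveObjects] (n : ℕ) (Z : C) [hZ : HasInjectiveDimensionLE Z n] :
    HasInjectiveDimensionLE (F.obj Z) n := by
  induction n generalizing Z with
  | zero =>
    have : Injective Z := injective_iff_hasInjectiveDimensionLT_one.2 hZ
    exact injective_iff_hasInjectiveDimensionLT_one.1 (F.injective_obj Z)
  | succ n ih =>
    obtain ⟨p⟩ := EnoughInjectives.presentation Z
    have hp := p.shortExact_shortComplex
    have : Injective p.shortComplex.X₂ := p.injective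
    have := (hp.hasInjectiveDimensionLT_X₃_iff n this).2 hZ
    exact ((hp.map_of_exact F).hasInjectiveDimensionLT_X₃_iff n (F.injective_obj _)).1
      (ih p.shortComplex.X₃)

-- Postcomposition with `p i ≫ q i` factors through `Ext Z Y i`, which vanishes.
theorem hasInjectiveDimensionLT_of_sum_eq_id {X Y : C} {ι : Type*} [Fintype ι]
    (p : ι → (X ⟶ Y)) (q : ι → (Y ⟶ X)) (hpq : ∑ i, p i ≫ q i = 𝟙 X) (n : ℕ)
    [HasInjectiveDimensionLT Y n] : HasInjectiveDimensionLT X n := by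
  let := HasExt.standard C
  rw [hasInjectiveDimensionLT_iff]
  intro d hd Z e
  have comp_eq_zero (i : ι) : e.comp (Abelian.Ext.mk₀ (p i ≫ q i)) (add_zero d) = 0 := by
    rw [← Abelian.Ext.mk₀_comp_mk₀, ← Abelian.Ext.comp_assoc_of_second_deg_zero,
      (e.comp (Abelian.Ext.mk₀ (p i)) (add_zero d)).eq_zero_of_hasInjectiveDimensionLT n hd,
      Abelian.Ext.zero_comp]
  rw [← e.comp_mk₀_id, ← hpq, Abelian.Ext.mk₀_sum, Abelian.Ext.comp_sum]
  exact Finset.sum_eq_zero fun i _ => comp_eq_zero i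

end InjectiveDimension

section InjDim

variable {R S : Type u} [Ring R] [Ring S]

theorem injDim_le_iff_hasInjectiveDimensionLE (M : ModuleCat.{u} R) (n : ℕ) :
    M.injDim ≤ n ↔ HasInjectiveDimensionLE M n := by
  constructor
  · intro h
    obtain ⟨I, hI⟩ := csInf_mem
      (⟨⊤, .of M, fun i hi => absurd hi not_top_lt⟩ : {m : ℕ∞ | ∃ I : InjectiveResolution M,
        ∀ i : ℕ, m < i → IsZero (I.cocomplex.X i)}.Nonempty)
    exact hasInjectiveDimensionLE_of_injectiveResolution I fun i hi =>
      hI i (h.trans_lt (by exact_mod_cast hi))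
  · intro _
    obtain ⟨I, hI⟩ := exists_injectiveResolution_of_hasInjectiveDimensionLE n M
    exact sInf_le ⟨I, fun i hi => hI i (by exact_mod_cast hi)⟩

theorem injDim_le_injDim_of_forall_hasInjectiveDimensionLE {M : ModuleCat.{u} R}
    {N : ModuleCat.{u} S} (h : ∀ n, HasInjectiveDimensionLE N n → HasInjectiveDimensionLE M n) :
    M.injDim ≤ N.injDim := by
  refine le_of_forall_ge fun n hn => ?_
  induction n using ENat.recTopCoe with
  | top => exact le_top
  | coe n =>
    rw [injDim_le_iff_hasInjectiveDimensionLE] at hn ⊢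
    exact h n hn

end InjDim

section Generator

variable {A : Type u} [Ring A]

theorem exists_surjective_finsupp_of_isCompl {M X : Type*} [AddCommGroup M] [Module A M]
    [AddCommGroup X] [Module A X] {P N : Submodule A M} (hPN : IsCompl P N)
    (h : ∃ (ι : Type u) (g : (ι →₀ P) →ₗ[A] X), Function.Surjective g) :
    ∃ (ι : Type u) (g : (ι →₀ M) →ₗ[A] X), Function.Surjective g := by
  obtain ⟨ι, g, hg⟩ := h
  exact ⟨ι, g ∘ₗ Finsupp.mapRange.linearMap (P.projectionOnto N hPN),
    hg.comp (Finsupp.mapRange_surjective _ (map_zero _) (Submodule.projectionOnto_surjective hPN))⟩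

theorem hasInjectiveDimensionLT_self_of_surjective_finsupp {M : Type u} [AddCommGroup M]
    [Module A M] {ι : Type*} (g : (ι →₀ M) →ₗ[A] A) (hg : Function.Surjective g) (n : ℕ)
    [HasInjectiveDimensionLT (ModuleCat.of A M) n] :
    HasInjectiveDimensionLT (ModuleCat.of A A) n := by
  obtain ⟨x, hx⟩ := hg 1
  have sum_eq_one : ∑ i : x.support, g (Finsupp.single i.1 (x i)) = 1 := by
    rw [← hx, ← map_sum, Finset.sum_coe_sort x.support fun i => Finsupp.single i (x i)]
    exact congrArg g x.sum_single
  refine hasInjectiveDimensionLT_of_sum_eq_id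
    (fun i : x.support => ModuleCat.ofHom (LinearMap.toSpanSingleton A M (x i)))
    (fun i => ModuleCat.ofHom (g ∘ₗ Finsupp.lsingle i.1)) ?_ n
  ext
  simpa using sum_eq_one

end Generator

namespace RightCharacter

variable {A B : Type u} [Ring A] [Ring B]

/-- The canonical map from a `B`-module `M` to the product of copies of the character module of `B`
indexed by the characters of `M`: the component at `χ` sends `x` to `b ↦ χ (b • x)`. -/
def toPi (B : Type u) [Ring B] (M : Type u) [AddCommGroup M] [Module B M] :
    M →ₗ[B] (CharacterModule M → RightCharacter B B) where
  toFun x χ := χ.comp ((smulAddHom B M).flip x)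
  map_add' x y := by
    funext χ
    refine AddMonoidHom.ext fun b => ?_
    change χ (b • (x + y)) = χ (b • x) + χ (b • y)
    rw [smul_add, map_add]
  map_smul' c x := by
    funext χ
    refine AddMonoidHom.ext fun b => ?_
    change χ (b • c • x) = χ ((b * c) • x)
    rw [mul_smul]

theorem toPi_injective (M : Type u) [AddCommGroup M] [Module B M] :
    Function.Injective (toPi B M) := by
  rw [injective_iff_map_eq_zero]
  refine fun x hx => CharacterModule.eq_zero_of_character_apply fun χ => ?_
  have apply_one_smul : χ ((1 : B) • x) = 0 := DFunLike.congr_fun (congrFun hx χ) (1 : B)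
  rwa [one_smul] at apply_one_smul

theorem exists_retract_pi_of_injective (M : ModuleCat.{u} B) [Injective M] :
    ∃ ι : Type u, Nonempty (Retract M (ModuleCat.of B (ι → RightCharacter B B))) := by
  have : Mono (ModuleCat.ofHom (toPi B M)) := (ModuleCat.mono_iff_injective _).2 (toPi_injective M)
  exact ⟨_, ⟨{
    i := ModuleCat.ofHom (toPi B M)
    r := Injective.factorThru (𝟙 M) (ModuleCat.ofHom (toPi B M))
    retract := Injective.comp_factorThru _ _ }⟩⟩

variable (f : A →+* B) [Module Aᵐᵒᵖ B]

/-- Restricting the scalars of a power of the character module of `B` along `f` gives the same power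
of the character module of the right `A`-module `B`. -/
def restrictScalarsPiEquiv (hr : ∀ (a : A) (b : B), MulOpposite.op a • b = b * f a) (ι : Type u) :
    (ModuleCat.restrictScalars.{u} f).obj (ModuleCat.of B (ι → RightCharacter B B)) ≃ₗ[A]
      (ι → RightCharacter A B) where
  __ := AddEquiv.refl (ι → RightCharacter A B)
  map_smul' a x := by
    funext i
    refine AddMonoidHom.ext fun b => ?_
    exact congrArg (x i) (hr a b).symm

theorem preservesInjectiveObjects_restrictScalars
    (hr : ∀ (a : A) (b : B), MulOpposite.op a • b = b * f a)
    [Module.Injective A (RightCharacter A B)] :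
    (ModuleCat.restrictScalars.{u} f).PreservesInjectiveObjects where
  injective_obj {M} _ := by
    obtain ⟨ι, ⟨ρ⟩⟩ := exists_retract_pi_of_injective M
    have : Injective (ModuleCat.of A (ι → RightCharacter A B)) :=
      (Module.injective_iff_injective_object A _).1 inferInstance
    have := Injective.of_iso (restrictScalarsPiEquiv f hr ι).toModuleIso.symm this
    exact (ρ.map (ModuleCat.restrictScalars.{u} f)).injective

end RightCharacter

/-- For a left `A`-module structure on `B` induced by `f`, this is `B` itself, seen as the
restriction of scalars of the regular module. -/
def restrictScalarsSelfEquiv {A B : Type u} [Ring A] [Ring B] (f : A →+* B) [Module A B]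
    (hl : ∀ (a : A) (b : B), a • b = f a * b) :
    (ModuleCat.restrictScalars.{u} f).obj (ModuleCat.of B B) ≃ₗ[A] B where
  __ := AddEquiv.refl B
  map_smul' a b := (hl a b).symm

theorem stmt_2_general {A B : Type u} [Ring A] [Ring B] (f : A →+* B)
    [Module A B] (hl : ∀ (a : A) (b : B), a • b = f a * b)
    [Module Aᵐᵒᵖ B] (hr : ∀ (a : A) (b : B), MulOpposite.op a • b = b * f a)
    (hgen : ∃ (ι : Type u) (g : (ι →₀ B) →ₗ[A] A), Function.Surjective g)
    (hflat : Module.Injective A (RightCharacter A B)) :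
    Ring.selfInjDim A ≤ Ring.selfInjDim B := by
  obtain ⟨ι, g, hg⟩ := hgen
  refine injDim_le_injDim_of_forall_hasInjectiveDimensionLE fun n _ => ?_
  have := RightCharacter.preservesInjectiveObjects_restrictScalars f hr
  have : PreservesFiniteLimits (ModuleCat.restrictScalars.{u} f) := ⟨fun _ _ _ => ⟨inferInstance⟩⟩
  have : PreservesFiniteColimits (ModuleCat.restrictScalars.{u} f) := ⟨fun _ _ _ => ⟨inferInstance⟩⟩
  have := hasInjectiveDimensionLE_obj (ModuleCat.restrictScalars.{u} f) n (ModuleCat.of B B)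
  have : HasInjectiveDimensionLE (ModuleCat.of A B) n :=
    hasInjectiveDimensionLT_of_iso (restrictScalarsSelfEquiv f hl).toModuleIso (n + 1)
  exact hasInjectiveDimensionLT_self_of_surjective_finsupp g hg (n + 1)

theorem stmt_2 (k : Type u) [Field k] (A B : Type u) [Ring A] [Ring B]
    [Algebra k A] [Algebra k B]
    (f : A →ₐ[k] B) (hf : Function.Injective f)
    [Module A B] (hl : ∀ (a : A) (b : B), a • b = f a * b)
    [Module Aᵐᵒᵖ B] (hr : ∀ (a : A) (b : B), (MulOpposite.op a) • b = b * f a)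
    -- `B = P ⊕ N` as left `A`-modules, with `P` projective and a generator:
    (hleft : ∃ P N : Submodule A B, IsCompl P N ∧ Module.Projective A P ∧
      ∀ (M : Type u) [AddCommGroup M] [Module A M],
        ∃ (ι : Type u) (g : (ι →₀ P) →ₗ[A] M), Function.Surjective g)
    -- `B = P ⊕ N` as right `A`-modules, with `P` projective and a generator:
    (hright : ∃ P N : Submodule Aᵐᵒᵖ B, IsCompl P N ∧ Module.Projective Aᵐᵒᵖ P ∧
      ∀ (M : Type u) [AddCommGroup M] [Module Aᵐᵒᵖ M],
        ∃ (ι : Type u) (g : (ι →₀ P) →ₗ[Aᵐᵒᵖ] M), Function.Surjective g)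
    -- `B` is flat as a right `A`-module:
    (hflat : Module.Injective A (RightCharacter A B)) :
    Ring.selfInjDim A ≤ Ring.selfInjDim B := by
  obtain ⟨P, N, hPN, -, hgen⟩ := hleft
  exact stmt_2_general f.toRingHom hl hr (exists_surjective_finsupp_of_isCompl hPN (hgen A)) hflat
end

section
/- Let D ⊆ Q be simple artinian k-algebras such that Q is finitely generated as a left D-module or as a right D-module. Then htr D = htr Q, i.e., the injective dimensions of D ⊗_k D^op and of Q ⊗_k Q^op, each as a left module over itself, are equal. -/
open CategoryTheory Limits TensorProduct

universe u

/-!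
Let `A → B` be an injective homomorphism of `k`-algebras with `A` semisimple. Then `B` is a
projective right `A`-module, so `B ⊗ C` is a projective right module over `A ⊗ C` and restriction
of scalars along `A ⊗ C → B ⊗ C` preserves injectives; and `A` is a direct summand of `B` as a left
`A`-module, so `A ⊗ C` is one of `B ⊗ C`. Hence `id (A ⊗ C) ≤ id (B ⊗ C)`; applying this to both
tensor factors of the enveloping algebra gives `htr A ≤ htr B`.

Since `Mₘ(D) ⊗ Mₘ(D)ᵒᵖ` is the ring of `m² × m²` matrices over `D ⊗ Dᵒᵖ`, Morita invariance gives
`htr Mₘ(D) ≤ htr D`. A nonzero finitely generated module `V` over the simple artinian ring `D` has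
`Vʳ ≅ Dᵐ` for some nonzero `r` and `m`, so one-sided finiteness of `Q` over `D` embeds `Q` into
`Mₘ(D)`. Monotonicity along `D ⊆ Q ⊆ Mₘ(D)` concludes.
-/

namespace Htr

section InjectiveResolutions

universe v w

variable {C : Type w} [Category.{v} C] [Abelian C]

theorem exact_comp_mono {X Y Z Z' : C} {f : X ⟶ Y} {g : Y ⟶ Z} {w : f ≫ g = 0}
    (h : (ShortComplex.mk f g w).Exact) (j : Z ⟶ Z') [Mono j] :
    (ShortComplex.mk f (g ≫ j) (by rw [reassoc_of% w, zero_comp])).Exact := by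
  let α : ShortComplex.mk f g w ⟶ ShortComplex.mk f (g ≫ j) (by rw [reassoc_of% w, zero_comp]) :=
    { τ₁ := 𝟙 _, τ₂ := 𝟙 _, τ₃ := j }
  have : Epi α.τ₁ := inferInstanceAs (Epi (𝟙 X))
  have : IsIso α.τ₂ := inferInstanceAs (IsIso (𝟙 Y))
  have : Mono α.τ₃ := ‹Mono j›
  exact (ShortComplex.exact_iff_of_epi_of_isIso_of_mono α).1 h

theorem exact_epi_comp {X' X Y Z : C} {f : X ⟶ Y} {g : Y ⟶ Z} {w : f ≫ g = 0}
    (h : (ShortComplex.mk f g w).Exact) (p : X' ⟶ X) [Epi p] :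
    (ShortComplex.mk (p ≫ f) g (by rw [Category.assoc, w, comp_zero])).Exact := by
  let α : ShortComplex.mk (p ≫ f) g (by rw [Category.assoc, w, comp_zero]) ⟶
      ShortComplex.mk f g w :=
    { τ₁ := p, τ₂ := 𝟙 _, τ₃ := 𝟙 _ }
  have : Epi α.τ₁ := ‹Epi p›
  have : IsIso α.τ₂ := inferInstanceAs (IsIso (𝟙 Y))
  have : Mono α.τ₃ := inferInstanceAs (Mono (𝟙 Z))
  exact (ShortComplex.exact_iff_of_epi_of_isIso_of_mono α).2 h

/-- The injective resolution given by an exact sequence `0 ⟶ M ⟶ K⁰ ⟶ K¹ ⟶ ⋯` with injective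
terms `Kⁱ`. -/
noncomputable def injectiveResolutionOfExact {M : C} (K : CochainComplex C ℕ)
    (hK : ∀ i, Injective (K.X i)) (ε : M ⟶ K.X 0) (hε : Mono ε) (w : ε ≫ K.d 0 1 = 0)
    (h₀ : (ShortComplex.mk ε (K.d 0 1) w).Exact) (h : ∀ i, K.ExactAt (i + 1)) :
    InjectiveResolution M where
  cocomplex := K
  injective := hK
  ι := (K.fromSingle₀Equiv M).symm ⟨ε, w⟩
  quasiIso := ⟨fun i => by
    cases i with
    | zero =>
      have hι : ((K.fromSingle₀Equiv M).symm ⟨ε, w⟩).f 0 = ε :=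
        CochainComplex.fromSingle₀Equiv_symm_apply_f_zero ε w
      rw [CochainComplex.quasiIsoAt₀_iff]
      refine (ShortComplex.quasiIso_iff_of_zeros _ rfl rfl (K.shape _ _ (by simp))).2 ?_
      refine (ShortComplex.exact_and_mono_f_iff_of_iso ?_).2 ⟨h₀, hε⟩
      exact ShortComplex.isoMk (Iso.refl _) (Iso.refl _) (Iso.refl _)
        ((Category.id_comp ε).trans (hι.symm.trans (Category.comp_id _).symm))
        ((Category.id_comp _).trans (Category.comp_id _).symm)
    | succ i =>
      rw [quasiIsoAt_iff_exactAt _ _ (CochainComplex.exactAt_succ_single_obj _ _)]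
      exact h i⟩

theorem exists_injectiveResolution_of_shortExact {S : ShortComplex C} (hS : S.ShortExact)
    [Injective S.X₂] (J : InjectiveResolution S.X₃) :
    ∃ I : InjectiveResolution S.X₁, ∀ i, I.cocomplex.X (i + 1) = J.cocomplex.X i := by
  have := hS.epi_g
  let ε : S.X₃ ⟶ J.cocomplex.X 0 := J.ι.f 0
  have : Mono ε := inferInstanceAs (Mono (J.ι.f 0))
  have hε : ε ≫ J.cocomplex.d 0 1 = 0 := J.ι_f_zero_comp_complex_d
  have exact_ε : (ShortComplex.mk ε (J.cocomplex.d 0 1) hε).Exact := J.exact₀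
  let d : S.X₂ ⟶ J.cocomplex.X 0 := S.g ≫ ε
  have hd : d ≫ J.cocomplex.d 0 1 = 0 := by rw [Category.assoc, hε, comp_zero]
  have exact_zero : (ShortComplex.mk S.f d (by rw [S.zero_assoc, zero_comp])).Exact :=
    exact_comp_mono hS.exact ε
  have exact_succ : ∀ i, (J.cocomplex.augment d hd).ExactAt (i + 1) := fun i => by
    rw [HomologicalComplex.exactAt_iff' _ i (i + 1) (i + 1 + 1) (by simp) (by simp)]
    cases i with
    | zero => exact exact_epi_comp exact_ε S.g
    | succ i => exact J.exact_succ i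
  have injective : ∀ i, Injective ((J.cocomplex.augment d hd).X i)
    | 0 => ‹Injective S.X₂›
    | i + 1 => J.injective i
  exact ⟨injectiveResolutionOfExact _ injective S.f hS.mono_f _ exact_zero exact_succ, fun _ => rfl⟩

theorem hasInjectiveDimensionLE_of_isZero {M : C} (I : InjectiveResolution M) {n : ℕ}
    (hI : ∀ i, n < i → IsZero (I.cocomplex.X i)) : HasInjectiveDimensionLE M n := by
  let := HasExt.standard C
  refine (hasInjectiveDimensionLT_iff M (n + 1)).2 fun i hi Y e => ?_
  obtain ⟨f, hf, rfl⟩ := I.extMk_surjective e _ rfl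
  rw [I.extMk_eq_zero_iff _ _ _ _ (i - 1) (by omega)]
  exact ⟨0, (hI i (by omega)).eq_of_tgt _ _⟩

variable [EnoughInjectives C]

theorem exists_injectiveResolution_isZero {n : ℕ} {M : C} (hM : HasInjectiveDimensionLE M n) :
    ∃ I : InjectiveResolution M, ∀ i, n < i → IsZero (I.cocomplex.X i) := by
  induction n generalizing M with
  | zero =>
    have : Injective M := injective_iff_hasInjectiveDimensionLT_one.2 hM
    exact ⟨InjectiveResolution.self M,
      fun i hi => HomologicalComplex.isZero_single_obj_X _ _ _ _ hi.ne'⟩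
  | succ n ih =>
    obtain ⟨P⟩ := EnoughInjectives.presentation M
    have hP := P.shortExact_shortComplex
    have : Injective P.shortComplex.X₂ := P.injective
    obtain ⟨J, hJ⟩ := ih ((hP.hasInjectiveDimensionLT_X₃_iff n P.injective).2 hM)
    obtain ⟨I, hI⟩ := exists_injectiveResolution_of_shortExact hP J
    refine ⟨I, fun i hi => ?_⟩
    obtain ⟨i, rfl⟩ := Nat.exists_eq_succ_of_ne_zero (Nat.ne_zero_of_lt hi)
    exact hI i ▸ hJ i (by omega)

end InjectiveResolutions

section InjectiveDimension

theorem injDim_le_injDim {R S : Type u} [Ring R] [Ring S] {M : ModuleCat.{u} R}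
    {N : ModuleCat.{u} S}
    (h : ∀ n : ℕ, HasInjectiveDimensionLE M n → HasInjectiveDimensionLE N n) :
    N.injDim ≤ M.injDim := by
  refine le_sInf ?_
  rintro n ⟨I, hI⟩
  induction n using ENat.recTopCoe with
  | top => exact le_top
  | coe n =>
    have hM : HasInjectiveDimensionLE M n :=
      hasInjectiveDimensionLE_of_isZero I fun i hi => hI i (by exact_mod_cast hi)
    obtain ⟨J, hJ⟩ := exists_injectiveResolution_isZero (h n hM)
    exact sInf_le ⟨J, fun i hi => hJ i (by exact_mod_cast hi)⟩

universe v w v' w'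

variable {C : Type w} [Category.{v} C] [Abelian C]

theorem hasInjectiveDimensionLE_map [EnoughInjectives C] {D : Type w'} [Category.{v'} D]
    [Abelian D] (F : C ⥤ D) [F.PreservesZeroMorphisms] [PreservesFiniteLimits F]
    [PreservesFiniteColimits F] [F.PreservesInjectiveObjects] {n : ℕ} {M : C}
    (hM : HasInjectiveDimensionLE M n) : HasInjectiveDimensionLE (F.obj M) n := by
  induction n generalizing M with
  | zero =>
    have : Injective M := injective_iff_hasInjectiveDimensionLT_one.2 hM
    exact injective_iff_hasInjectiveDimensionLT_one.1 (F.injective_obj M)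
  | succ n ih =>
    obtain ⟨P⟩ := EnoughInjectives.presentation M
    have hP := P.shortExact_shortComplex
    have := P.injective
    have hX₃ := ih ((hP.hasInjectiveDimensionLT_X₃_iff n P.injective).2 hM)
    exact ((hP.map_of_exact F).hasInjectiveDimensionLT_X₃_iff n (F.injective_obj P.J)).1 hX₃

theorem hasInjectiveDimensionLT_of_isBilimit {ι : Type*} [Finite ι] {X : ι → C} {c : Bicone X}
    (hc : c.IsBilimit) {n : ℕ} (hX : ∀ i, HasInjectiveDimensionLT (X i) n) :
    HasInjectiveDimensionLT c.pt n := by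
  have := Fintype.ofFinite ι
  let := HasExt.standard C
  refine (hasInjectiveDimensionLT_iff _ n).2 fun i hi Y e => ?_
  refine (Abelian.Ext.addEquivBiproduct Y hc i).injective (funext fun j => ?_)
  have := HasInjectiveDimensionLT.subsingleton (X j) n i hi Y
  exact Subsingleton.elim _ _

theorem hasInjectiveDimensionLT_pi {R : Type*} [Ring R] {ι : Type} [Finite ι]
    {M : ι → ModuleCat.{v} R} {n : ℕ} (hM : ∀ i, HasInjectiveDimensionLT (M i) n) :
    HasInjectiveDimensionLT (ModuleCat.of R (∀ i, M i)) n := by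
  have := Fintype.ofFinite ι
  have : HasInjectiveDimensionLT (⨁ M) n :=
    hasInjectiveDimensionLT_of_isBilimit (biproduct.isBilimit M) hM
  exact hasInjectiveDimensionLT_of_iso (ModuleCat.biproductIsoPi M) n

end InjectiveDimension

section SelfInjectiveDimension

attribute [local instance] RingHomInvPair.of_ringEquiv

theorem selfInjDim_eq_of_ringEquiv {R S : Type u} [Ring R] [Ring S] (e : R ≃+* S) :
    Ring.selfInjDim R = Ring.selfInjDim S := by
  have h (n : ℕ) : HasInjectiveDimensionLE (ModuleCat.of R R) n ↔
      HasInjectiveDimensionLE (ModuleCat.of S S) n :=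
    ModuleCat.hasInjectiveDimensionLE_iff_of_semiLinearEquiv e (M := ModuleCat.of R R)
      (N := ModuleCat.of S S) e.toSemilinearEquiv n
  exact le_antisymm (injDim_le_injDim fun n => (h n).2) (injDim_le_injDim fun n => (h n).1)

/-- `Mₙ(R)` as a left module over itself corresponds to `Rⁿ` under the Morita equivalence
between `R` and `Mₙ(R)`. -/
noncomputable def matrixIsoToMatrixModCat (R : Type u) [Ring R] (ι : Type) [Fintype ι]
    [DecidableEq ι] : ModuleCat.of (Matrix ι ι R) (Matrix ι ι R) ≅
      (ModuleCat.toMatrixModCat R ι).obj (ModuleCat.of R (ι → R)) :=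
  let e : Matrix ι ι R ≃ₗ[Matrix ι ι R]
      (ModuleCat.toMatrixModCat R ι).obj (ModuleCat.of R (ι → R)) :=
    { (Matrix.ofAddEquiv (m := ι) (n := ι) (α := R)).symm with
      map_smul' := fun A B => by
        change (A * B : Matrix ι ι R) = fun i => ∑ j, A i j • (B j : ι → R)
        ext i j
        simp [Matrix.mul_apply] }
  e.toModuleIso

theorem selfInjDim_matrix_le (R : Type u) [Ring R] (ι : Type) [Fintype ι] [DecidableEq ι]
    [Nonempty ι] : Ring.selfInjDim (Matrix ι ι R) ≤ Ring.selfInjDim R := by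
  obtain ⟨i⟩ := ‹Nonempty ι›
  have : (ModuleCat.toMatrixModCat.{u} R ι).IsEquivalence :=
    (ModuleCat.matrixEquivalence R i).isEquivalence_functor
  refine injDim_le_injDim fun n h => ?_
  have : HasInjectiveDimensionLE (ModuleCat.of R (ι → R)) n :=
    hasInjectiveDimensionLT_pi (M := fun _ => ModuleCat.of R R) fun _ => h
  have := hasInjectiveDimensionLE_map (ModuleCat.toMatrixModCat R ι) this
  exact hasInjectiveDimensionLT_of_iso (matrixIsoToMatrixModCat R ι).symm _

end SelfInjectiveDimension

section RestrictionOfScalars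

universe v

/-- A dual basis of `T` as a right `S`-module along `f : S →+* T`: a generating family together
with coordinate functionals. Its existence expresses that `T` is a projective right `S`-module,
without introducing a right module structure on `T`. -/
structure RightDualBasis {S T : Type*} [Ring S] [Ring T] (f : S →+* T) (ι : Type*) where
  vec : ι → T
  coord : T →+ ι →₀ S
  coord_mul : ∀ t s i, coord (t * f s) i = coord t i * s
  sum_coord : ∀ t, (coord t).sum (fun i s => vec i * f s) = t

theorem exists_comp_eq_of_ker_le {R : Type u} [Ring R] {M : Type v} {P Q : Type*} [AddCommGroup M]
    [AddCommGroup P] [AddCommGroup Q] [Module R M] [Module R P] [Module R Q]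
    (hM : Module.Baer R M) (p : P →ₗ[R] Q) (g : P →ₗ[R] M) (h : p.ker ≤ g.ker) :
    ∃ g' : Q →ₗ[R] M, g' ∘ₗ p = g := by
  obtain ⟨g', hg'⟩ := hM.extension_property (p.ker.liftQ p le_rfl)
    (LinearMap.ker_eq_bot.1 (Submodule.ker_liftQ_eq_bot' _ _ rfl)) (p.ker.liftQ g h)
  exact ⟨g', LinearMap.ext fun x => LinearMap.congr_fun hg' (p.ker.mkQ x)⟩

variable {S T : Type u} [Ring S] [Ring T] {f : S →+* T} {ι : Type*}
  {M : Type v} [AddCommGroup M] [Module T M] [Module S M]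

-- With `c x i = ∑ⱼ (coord tⱼ i) j` for `x = ∑ⱼ tⱼ [j]`, both maps factor through `c`, and `c x`
-- is the family of coordinates of `∑ⱼ tⱼ f(j)`.
theorem RightDualBasis.ker_linearCombination_le (b : RightDualBasis f ι)
    (hs : ∀ (s : S) (m : M), s • m = f s • m) (J : Ideal S) (g : J →ₗ[S] M) :
    (Finsupp.linearCombination T fun j : J => f j).ker ≤ (Finsupp.linearCombination T g).ker := by
  let c : (J →₀ T) →+ ι →₀ J := Finsupp.liftAddHom fun j =>
    (Finsupp.mapRange.addMonoidHom ((LinearMap.toSpanSingleton S J j).toAddMonoidHom)).comp b.coord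
  let v : (ι →₀ J) →+ M := Finsupp.liftAddHom fun i =>
    (DistribSMul.toAddMonoidHom M (b.vec i)).comp g.toAddMonoidHom
  have coe_c (x : J →₀ T) (i : ι) :
      (c x i : S) = b.coord (Finsupp.linearCombination T (fun j : J => f j) x) i := by
    induction x using Finsupp.induction_linear with
    | zero => simp
    | add x y hx hy => simp [hx, hy]
    | single j t => simp [c, b.coord_mul]
  have v_c (x : J →₀ T) : v (c x) = Finsupp.linearCombination T g x := by
    induction x using Finsupp.induction_linear with
    | zero => simp
    | add x y hx hy => simp [hx, hy]
    | single j t =>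
      calc v (c (Finsupp.single j t))
          = (b.coord t).sum fun i s => (b.vec i * f s) • g j := by
            simp [v, c, Finsupp.sum_mapRange_index, hs, mul_smul]
        _ = ((b.coord t).sum fun i s => b.vec i * f s) • g j := Finset.sum_smul.symm
        _ = Finsupp.linearCombination T g (Finsupp.single j t) := by
            rw [b.sum_coord, Finsupp.linearCombination_single]
  intro x hx
  have c_x : c x = 0 := by
    ext i
    rw [coe_c, LinearMap.mem_ker.1 hx]
    simp
  rw [LinearMap.mem_ker, ← v_c, c_x, map_zero]

theorem RightDualBasis.baer (b : RightDualBasis f ι) (hs : ∀ (s : S) (m : M), s • m = f s • m)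
    (hM : Module.Baer T M) : Module.Baer S M := by
  intro J g
  obtain ⟨h, hh⟩ := exists_comp_eq_of_ker_le hM _ _ (b.ker_linearCombination_le hs J g)
  refine ⟨LinearMap.toSpanSingleton S M (h 1), fun s hsJ => ?_⟩
  calc LinearMap.toSpanSingleton S M (h 1) s
      = h (f s) := by
        rw [LinearMap.toSpanSingleton_apply, hs, ← map_smul, smul_eq_mul, mul_one]
    _ = g ⟨s, hsJ⟩ := by
        simpa using LinearMap.congr_fun hh (Finsupp.single ⟨s, hsJ⟩ 1)

variable (f) in
theorem restrictScalars_preservesFiniteLimits_and_preservesFiniteColimits :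
    PreservesFiniteLimits (ModuleCat.restrictScalars.{v} f) ∧
      PreservesFiniteColimits (ModuleCat.restrictScalars.{v} f) :=
  ((Functor.exact_tfae _).out 1 3).1 fun X hX => by
    rw [ShortComplex.ShortExact.moduleCat_exact_iff_function_exact] at hX ⊢
    exact hX

theorem RightDualBasis.preservesInjectiveObjects_restrictScalars (b : RightDualBasis f ι) :
    (ModuleCat.restrictScalars.{u} f).PreservesInjectiveObjects where
  injective_obj {M} hM := by
    rw [← Module.injective_iff_injective_object] at hM ⊢
    let : Module T ((ModuleCat.restrictScalars f).obj M) := inferInstanceAs (Module T M)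
    exact (b.baer (fun _ _ => rfl) (M := (ModuleCat.restrictScalars f).obj M)
      (Module.Baer.of_injective hM)).injective

/-- `S` is a direct summand of `T` as a left `S`-module, by a left `S`-linear map
`π : T → S` sending `1` to `1`. -/
def retractRestrictScalars (π : T →+ S) (hπ : ∀ s t, π (f s * t) = s * π t) (hπ_one : π 1 = 1) :
    Retract (ModuleCat.of S S) ((ModuleCat.restrictScalars f).obj (ModuleCat.of T T)) :=
  let : Module S (ModuleCat.of T T) := Module.compHom T f
  let i : S →ₗ[S] (ModuleCat.restrictScalars f).obj (ModuleCat.of T T) :=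
    { toFun := f
      map_add' := map_add f
      map_smul' := map_mul f }
  let r : (ModuleCat.restrictScalars f).obj (ModuleCat.of T T) →ₗ[S] S :=
    { toFun := π
      map_add' := map_add π
      map_smul' := hπ }
  { i := ModuleCat.ofHom i
    r := ModuleCat.ofHom r
    retract := by
      ext
      exact (congrArg π (map_one f)).trans hπ_one }

theorem RightDualBasis.selfInjDim_le (b : RightDualBasis f ι) (π : T →+ S)
    (hπ : ∀ s t, π (f s * t) = s * π t) (hπ_one : π 1 = 1) :
    Ring.selfInjDim S ≤ Ring.selfInjDim T := by
  have := b.preservesInjectiveObjects_restrictScalars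
  obtain ⟨_, _⟩ := restrictScalars_preservesFiniteLimits_and_preservesFiniteColimits.{u} f
  refine injDim_le_injDim fun n h => ?_
  have := hasInjectiveDimensionLE_map (ModuleCat.restrictScalars.{u} f) h
  exact (retractRestrictScalars π hπ hπ_one).hasInjectiveDimensionLT _

end RestrictionOfScalars

section TensorProduct

universe v

variable {k : Type v} [CommRing k] {A B : Type u} [Ring A] [Ring B] [Algebra k A] [Algebra k B]

theorem nonempty_rightDualBasis [IsSemisimpleRing A] (f : A →ₐ[k] B) :
    Nonempty (RightDualBasis (f : A →+* B) B) := by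
  let : Module Aᵐᵒᵖ B := Module.compHom B (f : A →+* B).op
  obtain ⟨s, hs⟩ := (Module.projective_of_isSemisimpleRing Aᵐᵒᵖ B).out
  have smul_def (a : A) (x : B) : MulOpposite.op a • x = x * f a := rfl
  refine ⟨{
    vec := id
    coord := (Finsupp.mapRange.addMonoidHom MulOpposite.opAddEquiv.symm.toAddMonoidHom).comp
      s.toAddMonoidHom
    coord_mul := fun t a i => ?_
    sum_coord := fun t => ?_ }⟩
  · have := congrArg MulOpposite.unop (DFunLike.congr_fun (s.map_smul (MulOpposite.op a) t) i)
    simpa [smul_def] using this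
  · conv_rhs => rw [← hs t, Finsupp.linearCombination_apply]
    exact Finsupp.sum_mapRange_index (hf := map_zero _) (by simp)

theorem exists_retraction_of_injective [IsSemisimpleRing A] {f : A →ₐ[k] B}
    (hf : Function.Injective f) :
    ∃ π : B →ₗ[k] A, (∀ a b, π (f a * b) = a * π b) ∧ π 1 = 1 := by
  let : Module A B := Module.compHom B (f : A →+* B)
  have smul_def (a : A) (b : B) : a • b = f a * b := rfl
  have : IsScalarTower k A B := ⟨fun c a b => by simp [smul_def]⟩
  obtain ⟨π, hπ⟩ :=
    IsSemisimpleModule.extension_property (LinearMap.toSpanSingleton A B 1)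
      (fun a a' h => hf (by simpa [smul_def] using h)) LinearMap.id
  refine ⟨π.restrictScalars k, fun a b => π.map_smul a b, ?_⟩
  simpa using LinearMap.congr_fun hπ 1

section

variable (C : Type u) [Ring C] [Algebra k C] {ι : Type*} {f : A →ₐ[k] B}

/-- The coordinates of a dual basis, as a `k`-linear map. -/
def RightDualBasis.coordLinear (b : RightDualBasis (f : A →+* B) ι) : B →ₗ[k] ι →₀ A :=
  { b.coord with
    map_smul' := fun c t => by
      ext i
      have := b.coord_mul t (algebraMap k A c) i
      simpa [Algebra.smul_def, Algebra.commutes] using this }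

theorem RightDualBasis.coordLinear_apply (b : RightDualBasis (f : A →+* B) ι) (x : B) :
    b.coordLinear x = b.coord x :=
  rfl

/-- The dual basis `xᵢ ⊗ 1` of `B ⊗ C` over `A ⊗ C` obtained from a dual basis `xᵢ` of `B`
over `A`. -/
noncomputable def RightDualBasis.baseChange [DecidableEq ι]
    (b : RightDualBasis (f : A →+* B) ι) :
    RightDualBasis (Algebra.TensorProduct.map f (AlgHom.id k C) : A ⊗[k] C →+* B ⊗[k] C) ι where
  vec i := b.vec i ⊗ₜ 1
  coord := ((finsuppLeft k k A C ι).toLinearMap ∘ₗ b.coordLinear.rTensor C).toAddMonoidHom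
  coord_mul t s i := by
    induction s with
    | zero => simp
    | add s₁ s₂ h₁ h₂ => simp_all [mul_add]
    | tmul a c =>
      induction t with
      | zero => simp
      | add t₁ t₂ h₁ h₂ => simp_all [add_mul]
      | tmul x c' =>
        simpa [b.coordLinear_apply, finsuppLeft_apply_tmul_apply] using
          congrArg (· ⊗ₜ[k] (c' * c)) (b.coord_mul x a i)
  sum_coord t := by
    induction t with
    | zero => simp
    | add t₁ t₂ h₁ h₂ =>
      rw [map_add, Finsupp.sum_add_index' (by simp) (by simp [mul_add]), h₁, h₂]
    | tmul x c =>
      calc _ = ((b.coord x).sum fun i a => b.vec i * f a) ⊗ₜ[k] c := by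
            simp only [LinearMap.toAddMonoidHom_coe, LinearMap.coe_comp, LinearEquiv.coe_coe,
              Function.comp_apply, LinearMap.rTensor_tmul, b.coordLinear_apply,
              finsuppLeft_apply_tmul, RingHom.coe_coe, map_zero, mul_zero, implies_true, map_add,
              mul_add, Finsupp.sum_sum_index, Finsupp.sum_single_index,
              Algebra.TensorProduct.map_tmul, AlgHom.coe_id, id_eq,
              Algebra.TensorProduct.tmul_mul_tmul, one_mul]
            simp [Finsupp.sum, TensorProduct.sum_tmul]
        _ = x ⊗ₜ[k] c := congrArg (· ⊗ₜ c) (b.sum_coord x)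

theorem selfInjDim_tensorProduct_le_left [IsSemisimpleRing A] (hf : Function.Injective f) :
    Ring.selfInjDim (A ⊗[k] C) ≤ Ring.selfInjDim (B ⊗[k] C) := by
  classical
  obtain ⟨b⟩ := nonempty_rightDualBasis f
  obtain ⟨π, hπ, hπ_one⟩ := exists_retraction_of_injective hf
  refine (b.baseChange C).selfInjDim_le (π.rTensor C).toAddMonoidHom (fun s t => ?_)
    (by simp [Algebra.TensorProduct.one_def, hπ_one])
  induction s with
  | zero => simp
  | add s₁ s₂ h₁ h₂ => simp_all [add_mul]
  | tmul a c =>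
    induction t with
    | zero => simp
    | add t₁ t₂ h₁ h₂ => simp_all [mul_add]
    | tmul x c' => simp [hπ]

end

theorem selfInjDim_tensorProduct_le {A' B' : Type u} [Ring A'] [Ring B'] [Algebra k A']
    [Algebra k B'] [IsSemisimpleRing A] [IsSemisimpleRing A'] {f : A →ₐ[k] B} {f' : A' →ₐ[k] B'}
    (hf : Function.Injective f) (hf' : Function.Injective f') :
    Ring.selfInjDim (A ⊗[k] A') ≤ Ring.selfInjDim (B ⊗[k] B') :=
  calc Ring.selfInjDim (A ⊗[k] A')
      ≤ Ring.selfInjDim (B ⊗[k] A') := selfInjDim_tensorProduct_le_left A' hf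
    _ = Ring.selfInjDim (A' ⊗[k] B) :=
        selfInjDim_eq_of_ringEquiv (Algebra.TensorProduct.comm k B A').toRingEquiv
    _ ≤ Ring.selfInjDim (B' ⊗[k] B) := selfInjDim_tensorProduct_le_left B hf'
    _ = Ring.selfInjDim (B ⊗[k] B') :=
        selfInjDim_eq_of_ringEquiv (Algebra.TensorProduct.comm k B' B).toRingEquiv

end TensorProduct

section HomologicalTranscendenceDegree

universe v

/-- The homological transcendence degree of a `k`-algebra: the injective dimension of its
enveloping algebra as a left module over itself. -/
noncomputable def htr (k : Type v) [CommRing k] (A : Type u) [Ring A] [Algebra k A] : ℕ∞ :=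
  Ring.selfInjDim (A ⊗[k] Aᵐᵒᵖ)

variable {k : Type v} [CommRing k]

theorem htr_le_of_injective {A B : Type u} [Ring A] [Ring B] [Algebra k A] [Algebra k B]
    [IsSemisimpleRing A] (f : A →ₐ[k] B) (hf : Function.Injective f) : htr k A ≤ htr k B :=
  selfInjDim_tensorProduct_le (f' := AlgHom.op f) hf
    (MulOpposite.op_injective.comp (hf.comp MulOpposite.unop_injective))

theorem htr_matrix_le (A : Type u) [Ring A] [Algebra k A] (ι : Type) [Fintype ι] [DecidableEq ι]
    [Nonempty ι] : htr k (Matrix ι ι A) ≤ htr k A :=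
  let e : Matrix ι ι A ⊗[k] (Matrix ι ι A)ᵐᵒᵖ ≃ₐ[k] Matrix (ι × ι) (ι × ι) (A ⊗[k] Aᵐᵒᵖ) :=
    (Algebra.TensorProduct.congr AlgEquiv.refl AlgEquiv.mopMatrix.symm).trans
      (Matrix.kroneckerTMulAlgEquiv ι ι k k A Aᵐᵒᵖ)
  (selfInjDim_eq_of_ringEquiv e.toRingEquiv).trans_le (selfInjDim_matrix_le _ (ι × ι))

end HomologicalTranscendenceDegree

section MatrixEmbedding

section

variable (D V : Type*) [Ring D] [IsSimpleRing D] [IsArtinianRing D] [AddCommGroup V] [Module D V]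
  [Module.Finite D V] [Nontrivial V]

theorem exists_linearEquiv_pi :
    ∃ r m : ℕ, r ≠ 0 ∧ m ≠ 0 ∧ Nonempty ((Fin r → V) ≃ₗ[D] (Fin m → D)) := by
  have isotypic := IsSimpleRing.isIsotypic D (D × V)
  obtain ⟨_, _, S, _, _⟩ := isotypic.linearEquiv_fun
  obtain ⟨r, ⟨eD⟩⟩ :=
    ((isotypic S).of_injective (.inl D D V) LinearMap.inl_injective).linearEquiv_fun
  obtain ⟨m, ⟨eV⟩⟩ :=
    ((isotypic S).of_injective (.inr D D V) LinearMap.inr_injective).linearEquiv_fun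
  refine ⟨r, m, ?_, ?_, ⟨?_⟩⟩
  · rintro rfl
    exact not_subsingleton D eD.toEquiv.subsingleton
  · rintro rfl
    exact not_subsingleton V eV.toEquiv.subsingleton
  · exact (LinearEquiv.piCongrRight fun _ => eV) ≪≫ₗ
      { Equiv.piComm fun _ _ => S with
        map_add' := fun _ _ => rfl
        map_smul' := fun _ _ => rfl } ≪≫ₗ
      (LinearEquiv.piCongrRight fun _ => eD.symm)

theorem exists_injective_algHom_matrix (k A : Type*) [CommRing k] [Algebra k D] [Module k V]
    [IsScalarTower k D V] [Ring A] [Algebra k A] [Module A V] [IsScalarTower k A V]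
    [SMulCommClass A D V] [FaithfulSMul A V] :
    ∃ m ≠ 0, ∃ g : A →ₐ[k] Matrix (Fin m) (Fin m) Dᵐᵒᵖ, Function.Injective g := by
  obtain ⟨r, m, hr, hm, ⟨e⟩⟩ := exists_linearEquiv_pi D V
  have : NeZero r := ⟨hr⟩
  let diag : A →ₐ[k] Module.End D (Fin r → V) := Algebra.lsmul k D (Fin r → V)
  have diag_injective : Function.Injective diag := fun a b h =>
    FaithfulSMul.eq_of_smul_eq_smul fun v : V =>
      congrFun (LinearMap.congr_fun h fun _ => v) 0
  let toMatrix : Module.End D (Fin r → V) ≃ₐ[k] Matrix (Fin m) (Fin m) Dᵐᵒᵖ :=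
    (e.conjAlgEquiv k).trans ((endVecAlgEquivMatrixEnd (Fin m) k D D).trans
      (AlgEquiv.moduleEndSelf k).symm.mapMatrix)
  exact ⟨m, hm, toMatrix.toAlgHom.comp diag, toMatrix.injective.comp diag_injective⟩

end

variable {k D Q : Type*} [CommRing k] [Ring D] [IsSimpleRing D] [IsArtinianRing D] [Algebra k D]
  [Ring Q] [Nontrivial Q] [Algebra k Q] (f : D →ₐ[k] Q)

theorem exists_injective_algHom_matrix_of_finite [Module D Q] [Module.Finite D Q]
    (hl : ∀ (d : D) (q : Q), d • q = f d * q) :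
    ∃ m ≠ 0, ∃ g : Q →ₐ[k] Matrix (Fin m) (Fin m) D, Function.Injective g := by
  have : IsScalarTower k D Q := ⟨fun c d q => by simp [hl]⟩
  have : SMulCommClass Qᵐᵒᵖ D Q := ⟨fun q d x => by simp [hl, mul_assoc]⟩
  obtain ⟨m, hm, g, hg⟩ := exists_injective_algHom_matrix D Q k Qᵐᵒᵖ
  let toOp : Matrix (Fin m) (Fin m) Dᵐᵒᵖ ≃ₐ[k] (Matrix (Fin m) (Fin m) D)ᵐᵒᵖ :=
    AlgEquiv.mopMatrix
  exact ⟨m, hm, AlgHom.op.symm (toOp.toAlgHom.comp g), MulOpposite.unop_injective.comp <|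
    toOp.injective.comp <| hg.comp MulOpposite.op_injective⟩

theorem exists_injective_algHom_matrix_of_finite_mulOpposite [Module Dᵐᵒᵖ Q]
    [Module.Finite Dᵐᵒᵖ Q] (hr : ∀ (d : D) (q : Q), MulOpposite.op d • q = q * f d) :
    ∃ m ≠ 0, ∃ g : Q →ₐ[k] Matrix (Fin m) (Fin m) D, Function.Injective g := by
  have smul_eq (d : Dᵐᵒᵖ) (q : Q) : d • q = q * f d.unop := hr d.unop q
  have : IsScalarTower k Dᵐᵒᵖ Q := ⟨fun c d q => by simp [smul_eq]⟩
  have : SMulCommClass Q Dᵐᵒᵖ Q := ⟨fun q d x => by simp [smul_eq, mul_assoc]⟩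
  have : IsArtinianRing Dᵐᵒᵖ := IsSimpleRing.isSemisimpleRing_iff_isArtinianRing.1 inferInstance
  obtain ⟨m, hm, g, hg⟩ := exists_injective_algHom_matrix Dᵐᵒᵖ Q k Q
  let e : Matrix (Fin m) (Fin m) Dᵐᵒᵖᵐᵒᵖ ≃ₐ[k] Matrix (Fin m) (Fin m) D :=
    (AlgEquiv.opOp k D).symm.mapMatrix
  exact ⟨m, hm, e.toAlgHom.comp g, e.injective.comp hg⟩

end MatrixEmbedding

end Htr

theorem stmt_5_general (k : Type*) [CommRing k] (D Q : Type u) [Ring D] [Ring Q] [Algebra k D]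
    [Algebra k Q] [IsSimpleRing D] [IsArtinianRing D] [IsSemisimpleRing Q]
    (f : D →ₐ[k] Q) (hf : Function.Injective f)
    [Module D Q] (hl : ∀ (d : D) (q : Q), d • q = f d * q)
    [Module Dᵐᵒᵖ Q] (hr : ∀ (d : D) (q : Q), MulOpposite.op d • q = q * f d)
    (hfin : Module.Finite D Q ∨ Module.Finite Dᵐᵒᵖ Q) :
    Htr.htr k D = Htr.htr k Q := by
  have : Nontrivial Q := hf.nontrivial
  obtain ⟨m, hm, g, hg⟩ :
      ∃ m ≠ 0, ∃ g : Q →ₐ[k] Matrix (Fin m) (Fin m) D, Function.Injective g :=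
    hfin.elim (fun _ => Htr.exists_injective_algHom_matrix_of_finite f hl)
      (fun _ => Htr.exists_injective_algHom_matrix_of_finite_mulOpposite f hr)
  have : NeZero m := ⟨hm⟩
  exact le_antisymm (Htr.htr_le_of_injective f hf)
    ((Htr.htr_le_of_injective g hg).trans (Htr.htr_matrix_le D (Fin m)))

/-!
Statement 5 (Proposition 1.5(c)): if `D ⊆ Q` are simple artinian `k`-algebras and `Q` is
finitely generated as a left `D`-module (for the action `d • q = f d * q`) or as a right
`D`-module (for the action `dᵒᵖ • q = q * f d`), then `htr D = htr Q`.
-/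

theorem stmt_5 (k : Type u) [Field k] (D Q : Type u) [Ring D] [Ring Q]
    [Algebra k D] [Algebra k Q]
    [IsSimpleRing D] [IsArtinianRing D] [IsSimpleRing Q] [IsArtinianRing Q]
    (f : D →ₐ[k] Q) (hf : Function.Injective f)
    [Module D Q] (hl : ∀ (d : D) (q : Q), d • q = f d * q)
    [Module Dᵐᵒᵖ Q] (hr : ∀ (d : D) (q : Q), (MulOpposite.op d) • q = q * f d)
    (hfin : Module.Finite D Q ∨ Module.Finite Dᵐᵒᵖ Q) :
    Ring.selfInjDim (D ⊗[k] Dᵐᵒᵖ) = Ring.selfInjDim (Q ⊗[k] Qᵐᵒᵖ) :=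
  stmt_5_general k D Q f hf hl hr hfin
end
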